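/- arXiv:1807.10017 — 2 statements merged into one kernel-verified Lean document; each statement's English description precedes it below -/
import Mathlib

section
/- Let A∈ℝ∖{0} and B∈ℝ, let f₀(r)=Ar²+B, let x₀∈(0,1) be the unique zero on (0,1) of x↦F(1−√2,1+√2;1;x), and set Ω₀=B/2+A/(4x₀). Then there exist a>0, an open neighborhood U of (Ω₀,f₀) in ℝ×C([0,1];ℝ), and a continuous curve ξ∈(−a,a)↦(Ω_ξ,f_ξ)∈U with (Ω_{ξ=0},f_{ξ=0})=(Ω₀,f₀) and f_ξ≠f₀ for ξ≠0, such that G_rad(Ω_ξ,f_ξ)=0 for all ξ∈(−a,a). -/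
open MeasureTheory Real Set

/-- Rising factorial (Pochhammer symbol) `(a)_k`. -/
noncomputable def poch (a : ℝ) (k : ℕ) : ℝ := (ascPochhammer ℝ k).eval a

/-- Gauss hypergeometric function `F(a,b;c;x)`: given by Euler's integral representation
when `c > b > 0` (valid for all `x ∈ (-∞,1]`), and by the defining power series otherwise. -/
noncomputable def hyper (a b c x : ℝ) : ℝ :=
  if b < c ∧ 0 < b then
    Real.Gamma c / (Real.Gamma b * Real.Gamma (c - b)) *
      ∫ t in (0:ℝ)..1, t ^ (b - 1) * (1 - t) ^ (c - b - 1) * (1 - x * t) ^ (-a)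
  else
    ∑' k : ℕ, poch a k * poch b k / (poch c k * (Nat.factorial k)) * x ^ k

/-- The coefficient `a_t = (t - √(t²+8))/2`. -/
noncomputable def aCoef (t : ℝ) : ℝ := (t - Real.sqrt (t ^ 2 + 8)) / 2

/-- The coefficient `b_t = (t + √(t²+8))/2`. -/
noncomputable def bCoef (t : ℝ) : ℝ := (t + Real.sqrt (t ^ 2 + 8)) / 2

/-- `F_t(x) = F(a_t, b_t; t+1; x)`. -/
noncomputable def Fhyp (t x : ℝ) : ℝ := hyper (aCoef t) (bCoef t) (t + 1) x

/-- The dispersion function `ζ_n` associated with the quadratic profile `f₀(r) = Ar² + B`. -/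
noncomputable def zetaDisp (A B : ℝ) (n : ℕ) (x : ℝ) : ℝ :=
  Fhyp n x * (1 - x + (A + 2 * B) / (A * ((n : ℝ) + 1)) * x)
    + ∫ τ in (0:ℝ)..1, Fhyp n (τ * x) * τ ^ n * (-1 + 2 * x * τ)

/-- The radial functional `G_rad(Ω,f)(r)` associated with the quadratic profile
`f₀(r) = Ar² + B`. -/
noncomputable def Grad (A B Ω : ℝ) (f : ℝ → ℝ) (r : ℝ) : ℝ :=
  (4 * Ω - B) / (8 * A) * f r - f r ^ 2 / (16 * A)
    - (∫ τ in r..1, τ⁻¹ * ∫ s in (0:ℝ)..τ, s * f s)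
    - Ω * r ^ 2 / 2
    - (8 * Ω * B - 3 * B ^ 2 - A ^ 2 - 4 * A * B) / (16 * A)

/-!
Write `f(r) = A t + B + A ξ h(t)` with `t = r²`, and `Ω = B/2 + A μ/4`. The quadratic profile
solves the equation for every `Ω`, so a factor `ξ` splits off and there remains
`(μ - t) h - 2 K h = ξ h²/2`, where `K` is the inverse of `-d/dt (t d/dt)` vanishing at `t = 1`.
At `ξ = 0` this eigenvalue problem is solved by `μ = 1/x₀` and
`h₀(t) = F(1 - √2, 1 + √2; 1; x₀ t)`.

Since `K h = (V h)(1) - V h` with `V` of Volterra type, it suffices to solve the system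
`(μ - t) h + 2 V h - ξ h²/2 = 1/x₀`, `2 (V h)(1) = 1/x₀`, and the implicit function theorem gives
`(μ, h)` as functions of `ξ`. Its hypothesis holds for two reasons: `(1/x₀ - t) + 2 V` is
invertible because `1/x₀ > 1` and `V` is quasinilpotent, and the derivative in `μ` is transverse
because `K` is symmetric in `L²`. The first equation at `t = 0` shows `h(0) ≠ 0`, so the solutions
with `ξ ≠ 0` are nontrivial.
-/

section Eigencurve

open scoped Topology ContDiff

variable {𝕜 E : Type*} [NontriviallyNormedField 𝕜] [NormedAddCommGroup E] [NormedSpace 𝕜 E]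

/-- The bordered operator `(s, h) ↦ (ℓ h, S h + s • b)`, the linearization of an eigenvalue
problem with eigenvalue increment `s`, eigenvector increment `h` and normalization `ℓ`. -/
def bordered (S : E →L[𝕜] E) (b : E) (ℓ : E →L[𝕜] 𝕜) : 𝕜 × E →L[𝕜] 𝕜 × E :=
  (ℓ ∘L .snd 𝕜 𝕜 E).prod
    (S ∘L .snd 𝕜 𝕜 E + (ContinuousLinearMap.fst 𝕜 𝕜 E).smulRight b)

lemma bordered_apply (S : E →L[𝕜] E) (b : E) (ℓ : E →L[𝕜] 𝕜) (v : 𝕜 × E) :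
    bordered S b ℓ v = (ℓ v.2, S v.2 + v.1 • b) := rfl

/-- The map whose level sets are the normalized solutions `(ξ, μ, h)` of the perturbed
eigenvalue equation `T h + μ h - ξ Q(h) = const`, `ℓ h = const`. -/
def eigenMap (T : E →L[𝕜] E) (ℓ : E →L[𝕜] 𝕜) (Q : E → E) (v : 𝕜 × 𝕜 × E) : 𝕜 × E :=
  (ℓ v.2.2, T v.2.2 + v.2.1 • v.2.2 - v.1 • Q v.2.2)

variable {T : E →L[𝕜] E} {ℓ : E →L[𝕜] 𝕜} {Q : E → E} {μ₀ : 𝕜} {h₀ : E} {n : ℕ∞ω}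

lemma contDiffAt_eigenMap (hQ : ContDiffAt 𝕜 n Q h₀) :
    ContDiffAt 𝕜 n (eigenMap T ℓ Q) (0, μ₀, h₀) := by
  have hsnd : ContDiffAt 𝕜 n (fun v : 𝕜 × 𝕜 × E => v.2.2) (0, μ₀, h₀) := by fun_prop
  have hQ' : ContDiffAt 𝕜 n (fun v : 𝕜 × 𝕜 × E => Q v.2.2) (0, μ₀, h₀) := hQ.comp _ hsnd
  have hlin : ContDiffAt 𝕜 n (fun v : 𝕜 × 𝕜 × E => T v.2.2 + v.2.1 • v.2.2) (0, μ₀, h₀) := by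
    fun_prop
  exact (ℓ.contDiff.contDiffAt.comp _ hsnd).prodMk (hlin.sub (contDiffAt_fst.smul hQ'))

lemma fderiv_eigenMap_comp_inr (hQ : ContDiffAt 𝕜 n Q h₀) (hn : n ≠ 0) :
    fderiv 𝕜 (eigenMap T ℓ Q) (0, μ₀, h₀) ∘L .inr 𝕜 𝕜 (𝕜 × E) =
      bordered (T + μ₀ • 1) h₀ ℓ := by
  have hpartial : HasFDerivAt (fun v : 𝕜 × E => (ℓ v.2, T v.2 + v.1 • v.2))
      (bordered (T + μ₀ • 1) h₀ ℓ) (μ₀, h₀) := by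
    have hT := (T ∘L .snd 𝕜 𝕜 E).hasFDerivAt (x := (μ₀, h₀))
    have hsmul := (hasFDerivAt_fst (𝕜 := 𝕜) (p := (μ₀, h₀))).smul hasFDerivAt_snd
    convert! (ℓ ∘L .snd 𝕜 𝕜 E).hasFDerivAt.prodMk (hT.add hsmul) using 1
    ext v <;> simp [bordered_apply]
  have hfull := ((contDiffAt_eigenMap (T := T) (ℓ := ℓ) (μ₀ := μ₀) hQ).differentiableAt
    hn).hasFDerivAt.comp (μ₀, h₀) (hasFDerivAt_prodMk_right (0 : 𝕜) (μ₀, h₀))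
  refine hfull.unique (hpartial.congr_of_eventuallyEq (.of_forall fun v => ?_))
  simp [eigenMap]

variable [CompleteSpace 𝕜] [CompleteSpace E]

lemma isUnit_bordered {S : E →L[𝕜] E} {b : E} {ℓ : E →L[𝕜] 𝕜} (hS : IsUnit S)
    (hℓ : ∀ u, S u = b → ℓ u ≠ 0) : IsUnit (bordered S b ℓ) := by
  rw [ContinuousLinearMap.isUnit_iff_bijective] at hS ⊢
  obtain ⟨u, hu⟩ := hS.2 b
  constructor
  · refine (injective_iff_map_eq_zero _).2 fun ⟨s, h⟩ hsh => ?_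
    obtain ⟨hℓh, hSh⟩ : ℓ h = 0 ∧ S h + s • b = 0 := by
      simpa [bordered_apply] using hsh
    have hh : h = -(s • u) := hS.1 <| by
      rw [map_neg, map_smul, hu, eq_neg_of_add_eq_zero_left hSh]
    have hs : s = 0 := by simpa [hh, hℓ u hu] using hℓh
    simp [hh, hs]
  · rintro ⟨c, g⟩
    obtain ⟨w, rfl⟩ := hS.2 g
    refine ⟨((ℓ w - c) / ℓ u, w - ((ℓ w - c) / ℓ u) • u), ?_⟩
    simp [bordered_apply, hu, hℓ u hu]

theorem exists_contDiffAt_eigencurve {𝕜 E : Type*} [RCLike 𝕜] [NormedAddCommGroup E]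
    [NormedSpace 𝕜 E] [CompleteSpace E] {T : E →L[𝕜] E} {ℓ : E →L[𝕜] 𝕜} {Q : E → E} {μ₀ : 𝕜}
    {h₀ : E} {n : ℕ∞ω} (hT : IsUnit (T + μ₀ • 1))
    (hℓ : ∀ u, T u + μ₀ • u = h₀ → ℓ u ≠ 0) (hQ : ContDiffAt 𝕜 n Q h₀) (hn : n ≠ 0) :
    ∃ (μ : 𝕜 → 𝕜) (h : 𝕜 → E), μ 0 = μ₀ ∧ h 0 = h₀ ∧ ContDiffAt 𝕜 n μ 0 ∧ ContDiffAt 𝕜 n h 0 ∧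
      ∀ᶠ ξ in 𝓝 0, T (h ξ) + μ ξ • h ξ - ξ • Q (h ξ) = T h₀ + μ₀ • h₀ ∧ ℓ (h ξ) = ℓ h₀ := by
  have hΦ : ContDiffAt 𝕜 n (eigenMap T ℓ Q) (0, μ₀, h₀) := contDiffAt_eigenMap hQ
  have hinv : (fderiv 𝕜 (eigenMap T ℓ Q) (0, μ₀, h₀) ∘L .inr 𝕜 𝕜 (𝕜 × E)).IsInvertible := by
    rw [fderiv_eigenMap_comp_inr hQ hn]
    obtain ⟨N, hN⟩ := isUnit_bordered hT hℓ
    exact ⟨ContinuousLinearEquiv.unitsEquiv 𝕜 _ N, hN⟩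
  have hψ := hΦ.contDiffAt_implicitFunction hn hinv
  have hψ₀ : hΦ.implicitFunction hn hinv 0 = (μ₀, h₀) := hΦ.implicitFunction_apply_self hn hinv
  refine ⟨fun ξ => (hΦ.implicitFunction hn hinv ξ).1, fun ξ => (hΦ.implicitFunction hn hinv ξ).2,
    by simp only [hψ₀], by simp only [hψ₀], contDiffAt_fst.comp _ hψ, contDiffAt_snd.comp _ hψ, ?_⟩
  filter_upwards [hΦ.eventually_apply_implicitFunction hn hinv] with ξ hξ
  simpa [eigenMap, and_comm] using hξ

end Eigencurve

section Volterra

open scoped unitInterval Nat Topology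

/-- The coordinate function `t` of `C([0,1])`. -/
def coord : C(I, ℝ) := ⟨Subtype.val, continuous_subtype_val⟩

lemma coord_apply (t : I) : coord t = t := rfl

lemma norm_coord_pow_le (n : ℕ) : ‖coord ^ n‖ ≤ 1 := by
  refine (ContinuousMap.norm_le _ zero_le_one).2 fun t => ?_
  simpa [coord_apply, abs_of_nonneg t.2.1] using pow_le_one₀ t.2.1 t.2.2

lemma dense_span_range_coord_pow :
    Dense (Submodule.span ℝ (range fun n : ℕ => coord ^ n) : Set C(I, ℝ)) := by
  have hpoly : (polynomialFunctions I : Set C(I, ℝ)) ⊆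
      Submodule.span ℝ (range fun n : ℕ => coord ^ n) := by
    rintro _ ⟨p, -, rfl⟩
    induction p using Polynomial.induction_on' with
    | add p q hp hq =>
      simpa only [SetLike.mem_coe, AlgHom.coe_toRingHom, map_add] using add_mem hp hq
    | monomial n a =>
      have hmonomial :
          Polynomial.toContinuousMapOnAlgHom I (Polynomial.monomial n a) = a • coord ^ n := by
        ext t
        simp [coord_apply]
      have hmem : coord ^ n ∈ Submodule.span ℝ (range fun n : ℕ => coord ^ n) :=
        Submodule.subset_span (mem_range_self n)
      simpa [hmonomial] using Submodule.smul_mem _ a hmem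
  refine Dense.mono hpoly ?_
  rw [dense_iff_closure_eq, ← Subalgebra.topologicalClosure_coe,
    polynomialFunctions_closure_eq_top', Algebra.coe_top]

lemma continuous_integral_comp_mul (h : C(I, ℝ)) :
    Continuous fun t : I => ∫ u : I, h (t * u) := by
  simpa using continuous_parametric_integral_of_continuous (μ := volume)
    (f := fun t u : I => h (t * u)) (by fun_prop) isCompact_univ

lemma integrable_comp_mul (h : C(I, ℝ)) (t : I) : Integrable fun u : I => h (t * u) :=
  (show Continuous fun u : I => h (t * u) by fun_prop).integrable_of_hasCompactSupport
    (.of_compactSpace _)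

/-- The averaging operator `(mean h)(t) = ∫₀¹ h(tu) du = t⁻¹ ∫₀ᵗ h` on `C([0,1])`. -/
noncomputable def mean : C(I, ℝ) →L[ℝ] C(I, ℝ) :=
  LinearMap.mkContinuous
    { toFun h := ⟨fun t => ∫ u : I, h (t * u), continuous_integral_comp_mul h⟩
      map_add' g h := by
        ext t
        exact integral_add (integrable_comp_mul g t) (integrable_comp_mul h t)
      map_smul' c h := by
        ext t
        exact integral_const_mul c _ }
    1 fun h => by
      refine (ContinuousMap.norm_le _ (by positivity)).2 fun t => ?_
      simpa using norm_integral_le_of_norm_le_const (μ := (volume : Measure I))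
        (.of_forall fun u : I => h.norm_coe_le_norm (t * u))

lemma mean_apply (h : C(I, ℝ)) (t : I) : mean h t = ∫ u : I, h (t * u) := rfl

lemma abs_mean_le {g h : C(I, ℝ)} (hgh : ∀ t, |h t| ≤ g t) (t : I) : |mean h t| ≤ mean g t :=
  norm_integral_le_of_norm_le (f := fun u : I => h (t * u)) (integrable_comp_mul g t)
    (.of_forall fun u => hgh (t * u))

lemma integral_eq_intervalIntegral (g : ℝ → ℝ) : ∫ u : I, g u = ∫ u in (0 : ℝ)..1, g u := by
  rw [intervalIntegral.integral_of_le zero_le_one, ← integral_Icc_eq_integral_Ioc]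
  exact integral_subtype_comap measurableSet_Icc g

lemma mean_coord_pow (n : ℕ) : mean (coord ^ n) = ((n : ℝ) + 1)⁻¹ • coord ^ n := by
  ext t
  have hpow : ∫ u : I, (u : ℝ) ^ n = ((n : ℝ) + 1)⁻¹ := by
    simp [integral_eq_intervalIntegral (· ^ n)]
  simp [mean_apply, coord_apply, mul_pow, integral_const_mul, hpow, mul_comm]

lemma coe_mul_mean (h : C(I, ℝ)) (t : I) :
    t * mean h t = ∫ x in (0 : ℝ)..t, IccExtend zero_le_one h x := by
  have hmean : mean h t = ∫ u in (0 : ℝ)..1, IccExtend zero_le_one h (t * u) := by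
    rw [← integral_eq_intervalIntegral fun u => IccExtend zero_le_one h (t * u), mean_apply]
    congr with u
    exact (IccExtend_val zero_le_one h (t * u)).symm
  rw [hmean, intervalIntegral.mul_integral_comp_mul_left, mul_zero, mul_one]

/-- The Volterra operator `(volterra h)(t) = ∫₀ᵗ y⁻¹ ∫₀ʸ h(s) ds dy`, written through `mean`
so that no division by `y` occurs. -/
noncomputable def volterra : C(I, ℝ) →L[ℝ] C(I, ℝ) :=
  ContinuousLinearMap.mul ℝ _ coord ∘L mean ∘L mean

lemma volterra_apply (h : C(I, ℝ)) (t : I) : volterra h t = t * mean (mean h) t := rfl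

lemma volterra_coord_pow (n : ℕ) :
    volterra (coord ^ n) = (((n : ℝ) + 1) ^ 2)⁻¹ • coord ^ (n + 1) := by
  ext t
  simp only [volterra_apply, mean_coord_pow, map_smul, ContinuousMap.smul_apply,
    ContinuousMap.pow_apply, coord_apply, smul_eq_mul]
  field_simp
  ring

lemma abs_volterra_le {h : C(I, ℝ)} {c : ℝ} {n : ℕ}
    (hh : ∀ t : I, |h t| ≤ c * (t : ℝ) ^ n) (t : I) :
    |volterra h t| ≤ c / (n + 1) ^ 2 * (t : ℝ) ^ (n + 1) := by
  have hmean := abs_mean_le (abs_mean_le (g := c • coord ^ n) hh) t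
  have hpow : t * mean (mean (c • coord ^ n)) t = c / (n + 1) ^ 2 * (t : ℝ) ^ (n + 1) := by
    rw [← volterra_apply, map_smul, volterra_coord_pow]
    simp [coord_apply, mul_assoc, div_eq_mul_inv]
  rw [volterra_apply, abs_mul, abs_of_nonneg t.2.1, ← hpow]
  gcongr
  exact t.2.1

lemma abs_mul_volterra_pow_le (g h : C(I, ℝ)) (n : ℕ) (t : I) :
    |((ContinuousLinearMap.mul ℝ _ g ∘L volterra) ^ n) h t| ≤
      ‖g‖ ^ n * ‖h‖ / (n ! : ℝ) ^ 2 * (t : ℝ) ^ n := by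
  induction n generalizing t with
  | zero => simpa using h.norm_coe_le_norm t
  | succ n ih =>
    rw [pow_succ']
    have hV := abs_volterra_le ih t
    calc |g t * volterra (((ContinuousLinearMap.mul ℝ _ g ∘L volterra) ^ n) h) t|
        ≤ ‖g‖ * (‖g‖ ^ n * ‖h‖ / (n ! : ℝ) ^ 2 / (n + 1) ^ 2 * (t : ℝ) ^ (n + 1)) := by
          rw [abs_mul]
          gcongr
          exact g.norm_coe_le_norm t
      _ = ‖g‖ ^ (n + 1) * ‖h‖ / ((n + 1)! : ℝ) ^ 2 * (t : ℝ) ^ (n + 1) := by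
          rw [Nat.factorial_succ]
          push_cast
          field_simp
          ring

lemma norm_mul_volterra_pow_le (g : C(I, ℝ)) (n : ℕ) :
    ‖(ContinuousLinearMap.mul ℝ _ g ∘L volterra) ^ n‖ ≤ ‖g‖ ^ n / n ! := by
  refine ContinuousLinearMap.opNorm_le_bound _ (by positivity) fun h => ?_
  refine (ContinuousMap.norm_le _ (by positivity)).2 fun t => ?_
  have hfac : (n ! : ℝ) ≤ (n ! : ℝ) ^ 2 :=
    le_self_pow₀ (mod_cast n.factorial_pos) two_ne_zero
  calc _ ≤ ‖g‖ ^ n * ‖h‖ / (n ! : ℝ) ^ 2 * (t : ℝ) ^ n := abs_mul_volterra_pow_le g h n t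
    _ ≤ ‖g‖ ^ n * ‖h‖ / (n ! : ℝ) ^ 2 :=
      mul_le_of_le_one_right (by positivity) (pow_le_one₀ t.2.1 t.2.2)
    _ ≤ ‖g‖ ^ n * ‖h‖ / n ! := by gcongr
    _ = ‖g‖ ^ n / n ! * ‖h‖ := by ring

lemma isUnit_one_sub_of_norm_pow_lt_one {R : Type*} [NormedRing R] [HasSummableGeomSeries R]
    {x : R} {n : ℕ} (hx : ‖x ^ n‖ < 1) : IsUnit (1 - x) := by
  have hcomm : Commute (1 - x) (∑ i ∈ Finset.range n, x ^ i) :=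
    Commute.sum_right _ _ _ fun i _ =>
      ((Commute.one_left x).sub_left (Commute.refl x)).pow_right i
  have hprod : IsUnit ((1 - x) * ∑ i ∈ Finset.range n, x ^ i) := by
    rw [mul_neg_geom_sum]
    exact isUnit_one_sub_of_norm_lt_one hx
  exact (hcomm.isUnit_mul_iff.1 hprod).1

lemma isUnit_one_sub_mul_volterra (g : C(I, ℝ)) :
    IsUnit (1 - ContinuousLinearMap.mul ℝ _ g ∘L volterra) := by
  obtain ⟨n, hn⟩ := ((FloorSemiring.tendsto_pow_div_factorial_atTop ‖g‖).eventually
    (gt_mem_nhds zero_lt_one)).exists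
  exact isUnit_one_sub_of_norm_pow_lt_one (R := C(I, ℝ) →L[ℝ] C(I, ℝ)) (n := n)
    ((norm_mul_volterra_pow_le g n).trans_lt hn)

lemma isUnit_mul_add_smul_volterra {g : C(I, ℝ)} (hg : ∀ t, g t ≠ 0) (c : ℝ) :
    IsUnit (ContinuousLinearMap.mul ℝ _ g + c • volterra) := by
  obtain ⟨w, rfl⟩ := (ContinuousMap.isUnit_iff_forall_ne_zero g).2 hg
  have hw : IsUnit (ContinuousLinearMap.mul ℝ C(I, ℝ) (w : C(I, ℝ))) := by
    refine ⟨⟨ContinuousLinearMap.mul ℝ _ (w : C(I, ℝ)),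
      ContinuousLinearMap.mul ℝ _ (↑w⁻¹ : C(I, ℝ)), ?_, ?_⟩, rfl⟩ <;> ext1 h <;> simp
  convert hw.mul (isUnit_one_sub_mul_volterra (-(c • (↑w⁻¹ : C(I, ℝ))))) using 1
  ext1 h
  simp [mul_add]

end Volterra

section Potential

open scoped unitInterval Topology

/-- The radial potential `(potential h)(t) = ∫ₜ¹ y⁻¹ ∫₀ʸ h(s) ds dy`, which inverts
`-d/dt (t d/dt)` under the boundary condition `(potential h)(1) = 0`. -/
noncomputable def potential : C(I, ℝ) →L[ℝ] C(I, ℝ) :=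
  (ContinuousMap.evalCLM ℝ 1 ∘L volterra).smulRight 1 - volterra

lemma potential_apply (h : C(I, ℝ)) (t : I) : potential h t = volterra h 1 - volterra h t := by
  simp [potential]

lemma potential_coord_pow (n : ℕ) :
    potential (coord ^ n) = (((n : ℝ) + 1) ^ 2)⁻¹ • (1 - coord ^ (n + 1)) := by
  ext t
  simp [potential_apply, volterra_coord_pow, coord_apply, mul_sub]

lemma ext_coord_pow {E : Type*} [AddCommGroup E] [Module ℝ E] [TopologicalSpace E] [T2Space E]
    {L L' : C(I, ℝ) →L[ℝ] E} (h : ∀ n, L (coord ^ n) = L' (coord ^ n)) : L = L' :=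
  ContinuousLinearMap.ext_on dense_span_range_coord_pow <| by
    rintro _ ⟨n, rfl⟩
    exact h n

lemma mean_coord_pow_mul_potential (m n : ℕ) :
    mean (coord ^ m * potential (coord ^ n)) 1 = ((m + 1) * (n + 1) * (m + n + 2) : ℝ)⁻¹ := by
  rw [potential_coord_pow, mul_smul_comm, mul_sub, mul_one, ← pow_add, map_smul, map_sub,
    mean_coord_pow, mean_coord_pow]
  have hsum : (m + n + 2 : ℝ) ≠ 0 := by positivity
  simp only [ContinuousMap.smul_apply, ContinuousMap.sub_apply, ContinuousMap.pow_apply,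
    coord_apply, Icc.coe_one, one_pow, smul_eq_mul, mul_one, Nat.cast_add, Nat.cast_one]
  field_simp
  ring

lemma mean_mul_potential (g h : C(I, ℝ)) :
    mean (g * potential h) 1 = mean (potential g * h) 1 := by
  let ev : C(I, ℝ) →L[ℝ] ℝ := ContinuousMap.evalCLM ℝ 1 ∘L mean
  have hmonomial (m n : ℕ) :
      ev (coord ^ m * potential (coord ^ n)) = ev (potential (coord ^ m) * coord ^ n) := by
    rw [mul_comm (potential _)]
    refine (mean_coord_pow_mul_potential m n).trans ?_
    refine Eq.trans ?_ (mean_coord_pow_mul_potential n m).symm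
    ring
  have hright (m : ℕ) : ev (coord ^ m * potential h) = ev (potential (coord ^ m) * h) :=
    DFunLike.congr_fun (ext_coord_pow
      (L := ev ∘L ContinuousLinearMap.mul ℝ _ (coord ^ m) ∘L potential)
      (L' := ev ∘L ContinuousLinearMap.mul ℝ _ (potential (coord ^ m))) (hmonomial m)) h
  exact DFunLike.congr_fun (ext_coord_pow
    (L := ev ∘L (ContinuousLinearMap.mul ℝ C(I, ℝ)).flip (potential h))
    (L' := ev ∘L (ContinuousLinearMap.mul ℝ C(I, ℝ)).flip h ∘L potential) hright) g

lemma mean_mul_self_pos {h : C(I, ℝ)} (hh : h ≠ 0) : 0 < mean (h * h) 1 := by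
  obtain ⟨t, ht⟩ := DFunLike.ne_iff.1 hh
  have hmean : mean (h * h) 1 = ∫ x in (0 : ℝ)..1, IccExtend zero_le_one (h * h) x := by
    simpa using coe_mul_mean (h * h) 1
  rw [hmean]
  refine intervalIntegral.integral_pos zero_lt_one (h * h).continuous.Icc_extend'.continuousOn
    (fun x _ => mul_self_nonneg _) ⟨t, t.2, ?_⟩
  rw [IccExtend_val]
  exact mul_self_pos.2 ht

/-- Were `volterra u 1 = 0`, then `h₀ = g u - c K u` with `K = potential`, so that
`⟨h₀, h₀⟩ = ⟨g h₀ - c K h₀, u⟩ = 0` because `K` is symmetric. -/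
lemma volterra_apply_one_ne_zero {g h₀ u : C(I, ℝ)} {c : ℝ} (hh₀ : h₀ ≠ 0)
    (hker : g * h₀ = c • potential h₀) (hu : g * u + c • volterra u = h₀) :
    volterra u 1 ≠ 0 := by
  intro hzero
  have hu' : g * u - c • potential u = h₀ := by
    rw [← hu]
    ext t
    simp [potential_apply, hzero]
  have horth : mean (h₀ * h₀) 1 = 0 := by
    calc mean (h₀ * h₀) 1 = mean (h₀ * (g * u - c • potential u)) 1 := by rw [hu']
      _ = mean (g * h₀ * u) 1 - c * mean (h₀ * potential u) 1 := by
        rw [mul_sub, map_sub, mul_smul_comm, map_smul, mul_left_comm, mul_assoc]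
        rfl
      _ = 0 := by
        rw [hker, smul_mul_assoc, map_smul, mean_mul_potential]
        exact sub_self _
  exact (mean_mul_self_pos hh₀).ne' horth

end Potential

section GaussProfile

open scoped unitInterval Nat

/-- The Taylor coefficients of `F(1-√2,1+√2;1;·)`. -/
noncomputable def gaussCoeff (n : ℕ) : ℝ :=
  poch (1 - √2) n * poch (1 + √2) n / (poch 1 n * n !)

lemma poch_succ (a : ℝ) (n : ℕ) : poch a (n + 1) = poch a n * (a + n) := by
  simp [poch, ascPochhammer_succ_eval]

lemma gaussCoeff_zero : gaussCoeff 0 = 1 := by simp [gaussCoeff, poch]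

lemma gaussCoeff_succ (n : ℕ) : gaussCoeff (n + 1) = gaussCoeff n * (1 - 2 / (n + 1) ^ 2) := by
  have hpoch : poch 1 n ≠ 0 := (ascPochhammer_pos n 1 one_pos).ne'
  have hfactor : (1 - √2 + n) * (1 + √2 + n) = (n + 1) ^ 2 - 2 := by
    linear_combination -Real.sq_sqrt (zero_le_two (α := ℝ))
  simp only [gaussCoeff, poch_succ, Nat.factorial_succ, Nat.cast_mul, Nat.cast_succ]
  field_simp
  linear_combination poch (1 - √2) n * poch (1 + √2) n * (n + 1) * hfactor

lemma abs_gaussCoeff_le_one (n : ℕ) : |gaussCoeff n| ≤ 1 := by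
  induction n with
  | zero => simp [gaussCoeff_zero]
  | succ n ih =>
    have hfactor : |1 - 2 / ((n : ℝ) + 1) ^ 2| ≤ 1 := by
      have hle : 2 / ((n : ℝ) + 1) ^ 2 ≤ 2 :=
        div_le_self zero_le_two (one_le_pow₀ (by simp))
      have hnonneg : 0 ≤ 2 / ((n : ℝ) + 1) ^ 2 := by positivity
      exact abs_le.2 ⟨by linarith, by linarith⟩
    rw [gaussCoeff_succ, abs_mul]
    exact mul_le_one₀ ih (abs_nonneg _) hfactor

/-- `hyper` takes its power series branch here because `1 + √2 > 1`. -/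
lemma hyper_eq_tsum_gaussCoeff (x : ℝ) :
    hyper (1 - √2) (1 + √2) 1 x = ∑' n, gaussCoeff n * x ^ n :=
  if_neg fun h => absurd h.1 (by simp)

/-- The function `t ↦ F(1-√2,1+√2;1;xt)` as an element of `C([0,1])`, for `|x| < 1`. -/
noncomputable def gaussProfile (x : ℝ) : C(I, ℝ) := ∑' n, (gaussCoeff n * x ^ n) • coord ^ n

variable {x : ℝ}

lemma hasSum_gaussProfile (hx : |x| < 1) :
    HasSum (fun n => (gaussCoeff n * x ^ n) • coord ^ n) (gaussProfile x) := by
  refine (Summable.of_norm_bounded (summable_geometric_of_lt_one (abs_nonneg x) hx) ?_).hasSum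
  intro n
  calc ‖(gaussCoeff n * x ^ n) • coord ^ n‖ = |gaussCoeff n| * |x| ^ n * ‖coord ^ n‖ := by
        rw [norm_smul, Real.norm_eq_abs, abs_mul, abs_pow]
    _ ≤ 1 * |x| ^ n * 1 := by
        gcongr
        exacts [abs_gaussCoeff_le_one n, norm_coord_pow_le n]
    _ = |x| ^ n := by ring

lemma gaussProfile_apply_one (hx : |x| < 1) :
    gaussProfile x 1 = hyper (1 - √2) (1 + √2) 1 x := by
  rw [hyper_eq_tsum_gaussCoeff]
  refine (HasSum.tsum_eq ?_).symm
  simpa [coord_apply] using (hasSum_gaussProfile hx).mapL (ContinuousMap.evalCLM ℝ 1)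

/-- The integrated form of the hypergeometric differential equation. -/
lemma gaussProfile_eq (hx : |x| < 1) :
    gaussProfile x =
      1 + x • (coord * gaussProfile x - (2 : ℝ) • volterra (gaussProfile x)) := by
  have htail := (hasSum_nat_add_iff' 1).2 (hasSum_gaussProfile hx)
  have hmap := (hasSum_gaussProfile hx).mapL
    (x • (ContinuousLinearMap.mul ℝ _ coord - (2 : ℝ) • volterra))
  have hterm (n : ℕ) : (gaussCoeff (n + 1) * x ^ (n + 1)) • coord ^ (n + 1) =
      (x • (ContinuousLinearMap.mul ℝ _ coord - (2 : ℝ) • volterra))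
        ((gaussCoeff n * x ^ n) • coord ^ n) := by
    ext t
    simp only [gaussCoeff_succ, volterra_coord_pow, map_smul, sub_apply, smul_apply,
      ContinuousLinearMap.mul_apply', ContinuousMap.smul_apply, ContinuousMap.sub_apply,
      ContinuousMap.mul_apply, ContinuousMap.pow_apply, smul_eq_mul]
    field_simp
    ring
  simp_rw [← hterm] at hmap
  rw [← sub_eq_iff_eq_add']
  simpa [gaussCoeff_zero] using htail.unique hmap

lemma gaussProfile_apply_zero (hx : |x| < 1) : gaussProfile x 0 = 1 := by
  simpa [coord_apply, volterra_apply] using DFunLike.congr_fun (gaussProfile_eq hx) 0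

lemma volterra_gaussProfile_apply_one (hx : |x| < 1) (hx₀ : x ≠ 0)
    (hroot : hyper (1 - √2) (1 + √2) 1 x = 0) : 2 * volterra (gaussProfile x) 1 = x⁻¹ := by
  have hone := DFunLike.congr_fun (gaussProfile_eq hx) 1
  simp only [gaussProfile_apply_one hx, hroot, ContinuousMap.add_apply, ContinuousMap.one_apply,
    ContinuousMap.smul_apply, ContinuousMap.sub_apply, ContinuousMap.mul_apply, mul_zero,
    smul_eq_mul] at hone
  field_simp
  linarith

lemma sub_coord_mul_gaussProfile (hx : |x| < 1) (hx₀ : x ≠ 0) :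
    (x⁻¹ • 1 - coord) * gaussProfile x + (2 : ℝ) • volterra (gaussProfile x) = x⁻¹ • 1 := by
  ext t
  have ht := DFunLike.congr_fun (gaussProfile_eq hx) t
  simp only [ContinuousMap.add_apply, ContinuousMap.one_apply, ContinuousMap.smul_apply,
    ContinuousMap.sub_apply, ContinuousMap.mul_apply, smul_eq_mul, mul_one] at ht ⊢
  field_simp
  linarith

end GaussProfile

section SolutionCurve

open scoped unitInterval Topology ContDiff

/-- The operator `h ↦ 2 V h - t h`, with `V = volterra`, whose sum with `μ` is the linear part of
the radial equation. -/
noncomputable def radialVolterra : C(I, ℝ) →L[ℝ] C(I, ℝ) :=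
  (2 : ℝ) • volterra - ContinuousLinearMap.mul ℝ _ coord

lemma radialVolterra_add_smul (μ : ℝ) (h : C(I, ℝ)) :
    radialVolterra h + μ • h = (μ • 1 - coord) * h + (2 : ℝ) • volterra h := by
  rw [sub_mul, smul_one_mul]
  change (2 : ℝ) • volterra h - coord * h + μ • h = _
  abel

lemma isUnit_radialVolterra_add_smul {μ : ℝ} (hμ : 1 < μ) : IsUnit (radialVolterra + μ • 1) := by
  have hne (t : I) : (μ • 1 - coord) t ≠ 0 := by
    simpa [coord_apply] using sub_ne_zero.2 (t.2.2.trans_lt hμ).ne'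
  convert isUnit_mul_add_smul_volterra hne 2 using 1
  ext1 h
  exact radialVolterra_add_smul μ h

lemma two_smul_potential {h : C(I, ℝ)} {μ₀ : ℝ} (hh : 2 * volterra h 1 = μ₀) :
    (2 : ℝ) • potential h = μ₀ • 1 - (2 : ℝ) • volterra h := by
  ext t
  simp [potential_apply, mul_sub, hh]

lemma radialSolution_apply_zero_ne_zero {h : C(I, ℝ)} {μ μ₀ ξ : ℝ} (hμ₀ : μ₀ ≠ 0)
    (hh : (μ • 1 - coord) * h + (2 : ℝ) • volterra h - ξ • (2⁻¹ : ℝ) • (h * h) = μ₀ • 1) :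
    h 0 ≠ 0 := by
  intro hzero
  have hh0 := DFunLike.congr_fun hh 0
  exact hμ₀ (by simpa [hzero, volterra_apply] using hh0.symm)

theorem exists_solution_curve {x : ℝ} (hx : x ∈ Ioo (0 : ℝ) 1)
    (hroot : hyper (1 - √2) (1 + √2) 1 x = 0) :
    ∃ (μ : ℝ → ℝ) (h : ℝ → C(I, ℝ)), μ 0 = x⁻¹ ∧ AnalyticAt ℝ μ 0 ∧ AnalyticAt ℝ h 0 ∧
      ∀ᶠ ξ in 𝓝 0, h ξ 0 ≠ 0 ∧
        (μ ξ • 1 - coord) * h ξ - (2 : ℝ) • potential (h ξ) = ξ • (2⁻¹ : ℝ) • (h ξ * h ξ) := by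
  have hx1 : |x| < 1 := abs_lt.2 ⟨by linarith [hx.1], hx.2⟩
  have hinv : x⁻¹ ≠ 0 := inv_ne_zero hx.1.ne'
  have hone := volterra_gaussProfile_apply_one hx1 hx.1.ne' hroot
  have hprofile := sub_coord_mul_gaussProfile hx1 hx.1.ne'
  have hprofile₀ : gaussProfile x ≠ 0 := fun h => by
    simpa [h] using gaussProfile_apply_zero hx1
  have hker : (x⁻¹ • 1 - coord) * gaussProfile x = (2 : ℝ) • potential (gaussProfile x) := by
    rw [two_smul_potential hone, eq_sub_of_add_eq hprofile]
  have hunit : IsUnit (radialVolterra + x⁻¹ • 1) :=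
    isUnit_radialVolterra_add_smul ((one_lt_inv₀ hx.1).2 hx.2)
  obtain ⟨μ, h, hμ0, -, hμ, hh, hsol⟩ := exists_contDiffAt_eigencurve (n := ω)
    (ℓ := ContinuousMap.evalCLM ℝ 1 ∘L volterra) (Q := fun h => (2⁻¹ : ℝ) • (h * h)) hunit
    (fun u hu => volterra_apply_one_ne_zero hprofile₀ hker
      ((radialVolterra_add_smul _ u).symm.trans hu))
    (by fun_prop) (by simp)
  refine ⟨μ, h, hμ0, hμ.analyticAt, hh.analyticAt, hsol.mono fun ξ ⟨heq, hval⟩ => ?_⟩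
  rw [radialVolterra_add_smul, radialVolterra_add_smul, hprofile] at heq
  have hval' : 2 * volterra (h ξ) 1 = x⁻¹ := hone ▸ congrArg (2 * ·) hval
  refine ⟨radialSolution_apply_zero_ne_zero hinv heq, ?_⟩
  rw [two_smul_potential hval', ← heq]
  abel

end SolutionCurve

section RadialProfile

open scoped unitInterval

/-- The radial function `r ↦ φ(r²)` on `[0,1]`, extended to `ℝ` by a constant beyond `1`. -/
noncomputable def radialProfile (φ : C(I, ℝ)) (r : ℝ) : ℝ := IccExtend zero_le_one φ (r ^ 2)

lemma radialProfile_coe (φ : C(I, ℝ)) (r : I) : radialProfile φ r = φ (r ^ 2) := by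
  rw [radialProfile, ← Icc.coe_pow, IccExtend_val]

lemma continuous_radialProfile (φ : C(I, ℝ)) : Continuous (radialProfile φ) :=
  φ.continuous.Icc_extend'.comp (continuous_pow 2)

lemma exists_abs_radialProfile_sub_le {φ : ℝ → C(I, ℝ)} {ξ₀ ε : ℝ} (hφ : ContinuousAt φ ξ₀)
    (hε : 0 < ε) : ∃ δ > 0, ∀ ξ, |ξ - ξ₀| < δ →
      ∀ r ∈ I, |radialProfile (φ ξ) r - radialProfile (φ ξ₀) r| ≤ ε := by
  obtain ⟨δ, hδ, hball⟩ := Metric.continuousAt_iff.1 hφ ε hε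
  refine ⟨δ, hδ, fun ξ hξ r hr => ?_⟩
  lift r to I using hr
  rw [radialProfile_coe, radialProfile_coe]
  exact (ContinuousMap.dist_apply_le_dist (r ^ 2)).trans (hball hξ).le

lemma integral_mul_comp_sq {g : ℝ → ℝ} (hg : Continuous g) (a b : ℝ) :
    ∫ s in a..b, s * g (s ^ 2) = (∫ y in a ^ 2..b ^ 2, g y) / 2 := by
  have hsubst := intervalIntegral.integral_comp_mul_deriv (a := a) (b := b)
    (f := fun s : ℝ => s ^ 2) (f' := fun s => 2 * s)
    (fun s _ => by simpa using hasDerivAt_pow 2 s) (by fun_prop) hg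
  rw [← hsubst, ← intervalIntegral.integral_div]
  congr with s
  simp only [Function.comp_apply]
  ring

lemma integral_mul_radialProfile (φ : C(I, ℝ)) (r : I) :
    ∫ s in (0 : ℝ)..r, s * radialProfile φ s = (r : ℝ) ^ 2 * mean φ (r ^ 2) / 2 := by
  have hsubst := integral_mul_comp_sq (φ.continuous.Icc_extend' (h := zero_le_one)) 0 r
  rw [zero_pow two_ne_zero] at hsubst
  exact hsubst.trans (congrArg (· / 2) (coe_mul_mean φ (r ^ 2)).symm)

lemma integral_inv_mul_integral_radialProfile (φ : C(I, ℝ)) (r : I) :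
    ∫ τ in (r : ℝ)..1, τ⁻¹ * ∫ s in (0 : ℝ)..τ, s * radialProfile φ s =
      potential φ (r ^ 2) / 4 := by
  have hinner : EqOn (fun τ => τ⁻¹ * ∫ s in (0 : ℝ)..τ, s * radialProfile φ s)
      (fun τ => τ * radialProfile (mean φ) τ / 2) (uIcc r 1) := by
    intro τ hτ
    rw [uIcc_of_le r.2.2] at hτ
    lift τ to I using ⟨r.2.1.trans hτ.1, hτ.2⟩
    simp only [integral_mul_radialProfile, radialProfile_coe]
    rcases eq_or_ne (τ : ℝ) 0 with hτ0 | hτ0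
    · simp [hτ0]
    · field_simp
  have hint (a b : ℝ) :
      IntervalIntegrable (fun τ => τ * radialProfile (mean φ) τ) volume a b :=
    (continuous_id.mul (continuous_radialProfile _)).intervalIntegrable a b
  have hone : ∫ τ in (0 : ℝ)..1, τ * radialProfile (mean φ) τ = volterra φ 1 / 2 := by
    simpa [volterra_apply] using integral_mul_radialProfile (mean φ) 1
  rw [intervalIntegral.integral_congr hinner, intervalIntegral.integral_div,
    ← intervalIntegral.integral_interval_sub_left (hint 0 1) (hint 0 r), hone,
    integral_mul_radialProfile, potential_apply, volterra_apply φ (r ^ 2)]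
  push_cast
  ring

/-- In the variable `t = r²`, the perturbation `A t + B + A ξ h(t)` of the quadratic profile. -/
noncomputable def perturbedProfile (A B ξ : ℝ) (h : C(I, ℝ)) : C(I, ℝ) :=
  A • coord + B • 1 + (A * ξ) • h

lemma radialProfile_perturbedProfile (A B ξ : ℝ) (h : C(I, ℝ)) (r : I) :
    radialProfile (perturbedProfile A B ξ h) r = A * r ^ 2 + B + A * ξ * h (r ^ 2) := by
  simp [radialProfile_coe, perturbedProfile, coord_apply]

lemma potential_perturbedProfile (A B ξ : ℝ) (h : C(I, ℝ)) :
    potential (perturbedProfile A B ξ h) =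
      (A / 4) • (1 - coord ^ 2) + B • (1 - coord) + (A * ξ) • potential h := by
  have hcoord : potential coord = (1 / 4 : ℝ) • (1 - coord ^ 2) := by
    convert potential_coord_pow 1 using 2 <;> norm_num
  have hone : potential 1 = 1 - coord := by simpa using potential_coord_pow 0
  simp only [perturbedProfile, map_add, map_smul, hcoord, hone, smul_smul, mul_one_div]

/-- The quadratic profile solves the equation for every `μ`, hence the factor `ξ`. -/
lemma grad_perturbedProfile {A : ℝ} (hA : A ≠ 0) (B μ ξ : ℝ) (h : C(I, ℝ)) (r : I) :
    Grad A B (B / 2 + A / 4 * μ) (radialProfile (perturbedProfile A B ξ h)) r =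
      A * ξ / 8 * ((μ • 1 - coord) * h - (2 : ℝ) • potential h -
        ξ • (2⁻¹ : ℝ) • (h * h)) (r ^ 2) := by
  simp only [Grad, integral_inv_mul_integral_radialProfile, radialProfile_perturbedProfile,
    potential_perturbedProfile, ContinuousMap.add_apply, ContinuousMap.sub_apply,
    ContinuousMap.mul_apply, ContinuousMap.smul_apply, ContinuousMap.pow_apply,
    ContinuousMap.one_apply, coord_apply, Icc.coe_pow, smul_eq_mul]
  field_simp
  ring

end RadialProfile

/-- a continuous curve of solutions of the radial equation bifurcating from the
quadratic profile at the singular value `Ω₀ = B/2 + A/(4x₀)`. -/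
theorem radial_bifurcation (A B : ℝ) (hA : A ≠ 0) (x₀ : ℝ)
    (hx₀ : x₀ ∈ Ioo (0:ℝ) 1 ∧ hyper (1 - Real.sqrt 2) (1 + Real.sqrt 2) 1 x₀ = 0 ∧
      ∀ y ∈ Ioo (0:ℝ) 1, hyper (1 - Real.sqrt 2) (1 + Real.sqrt 2) 1 y = 0 → y = x₀) :
    ∃ a : ℝ, 0 < a ∧ ∃ Ωc : ℝ → ℝ, ∃ fc : ℝ → ℝ → ℝ,
      -- the curve passes through (Ω₀, f₀) at ξ = 0
      Ωc 0 = B / 2 + A / (4 * x₀) ∧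
      (∀ r ∈ Icc (0:ℝ) 1, fc 0 r = A * r ^ 2 + B) ∧
      -- continuity of the curve ξ ↦ (Ω_ξ, f_ξ) ∈ ℝ × C([0,1];ℝ)
      ContinuousOn Ωc (Ioo (-a) a) ∧
      (∀ ξ₀ ∈ Ioo (-a) a, ∀ ε : ℝ, 0 < ε → ∃ δ : ℝ, 0 < δ ∧
        ∀ ξ ∈ Ioo (-a) a, |ξ - ξ₀| < δ →
          ∀ r ∈ Icc (0:ℝ) 1, |fc ξ r - fc ξ₀ r| ≤ ε) ∧
      -- the curve consists of solutions, nontrivial for ξ ≠ 0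
      ∀ ξ ∈ Ioo (-a) a,
        ContinuousOn (fc ξ) (Icc 0 1) ∧
        (∀ r ∈ Icc (0:ℝ) 1, Grad A B (Ωc ξ) (fc ξ) r = 0) ∧
        (ξ ≠ 0 → ∃ r ∈ Icc (0:ℝ) 1, fc ξ r ≠ A * r ^ 2 + B) := by
  obtain ⟨hx, hroot, -⟩ := hx₀
  obtain ⟨μ, h, hμ0, hμ, hh, hsol⟩ := exists_solution_curve hx hroot
  obtain ⟨a, ha, hball⟩ := Metric.eventually_nhds_iff_ball.1
    (hμ.eventually_analyticAt.and (hh.eventually_analyticAt.and hsol))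
  simp only [Real.ball_eq_Ioo, zero_sub, zero_add] at hball
  refine ⟨a, ha, fun ξ => B / 2 + A / 4 * μ ξ,
    fun ξ => radialProfile (perturbedProfile A B ξ (h ξ)), ?_, ?_, ?_, ?_, ?_⟩
  · simp only [hμ0]
    ring
  · intro r hr
    simpa using radialProfile_perturbedProfile A B 0 (h 0) ⟨r, hr⟩
  · exact fun ξ hξ => ((hball ξ hξ).1.continuousAt.const_mul _).const_add _ |>.continuousWithinAt
  · intro ξ₀ hξ₀ ε hε
    have hcont : ContinuousAt (fun ξ => perturbedProfile A B ξ (h ξ)) ξ₀ :=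
      ((continuousAt_const.mul continuousAt_id).smul (hball ξ₀ hξ₀).2.1.continuousAt).const_add _
    obtain ⟨δ, hδ, hle⟩ := exists_abs_radialProfile_sub_le hcont hε
    exact ⟨δ, hδ, fun ξ _ => hle ξ⟩
  · intro ξ hξ
    obtain ⟨-, -, hne, heq⟩ := hball ξ hξ
    refine ⟨(continuous_radialProfile _).continuousOn, fun r hr => ?_,
      fun hξ0 => ⟨0, by simp, fun htrivial => hne ?_⟩⟩
    · simpa [heq] using grad_perturbedProfile hA B (μ ξ) ξ (h ξ) ⟨r, hr⟩
    · simpa [htrivial, hA, hξ0] using radialProfile_perturbedProfile A B ξ (h ξ) 0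
end

section
/- Let k∈ℕ and α∈(0,1). Suppose φ:𝕋→ℂ belongs to C^{k,α}(𝕋) and has the form φ(w)=w·Σ_{n≥0}a_n w^n for w∈𝕋, with real coefficients a_n. Define C(φ)(z)=Σ_{n≥0}a_n z^n for z∈𝔻̄. Then C(φ) is well-defined and continuous on 𝔻̄, holomorphic on 𝔻, belongs to C^{k,α}(𝔻̄), and satisfies ‖C(φ)‖_{C^{k,α}(𝔻̄)}≤6‖φ‖_{C^{k,α}(𝕋)}; in particular the linear map C is continuous from this subspace of C^{k,α}(𝕋) to C^{k,α}(𝔻̄). -/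
open MeasureTheory Metric Real Set

/-- Membership in the Hölder space `C^{k,α}(𝔻̄)` for a function on the closed unit disc. -/
def MemHolderDisc (k : ℕ) (α : ℝ) (f : ℂ → ℂ) : Prop :=
  ContDiffOn ℝ k f (closedBall 0 1) ∧
  ∃ C : ℝ, ∀ x ∈ closedBall (0:ℂ) 1, ∀ y ∈ closedBall (0:ℂ) 1,
    ‖iteratedFDerivWithin ℝ k f (closedBall 0 1) x
      - iteratedFDerivWithin ℝ k f (closedBall 0 1) y‖ ≤ C * ‖x - y‖ ^ α

/-- The `C^{k,α}(𝔻̄)` norm of a function on the closed unit disc. -/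
noncomputable def discHolderNorm (k : ℕ) (α : ℝ) (f : ℂ → ℂ) : ℝ :=
  (∑ j ∈ Finset.range (k + 1),
    sSup ((fun x => ‖iteratedFDerivWithin ℝ j f (closedBall 0 1) x‖) '' closedBall 0 1)) +
  sSup {c : ℝ | ∃ x ∈ closedBall (0:ℂ) 1, ∃ y ∈ closedBall (0:ℂ) 1, x ≠ y ∧
    c = ‖iteratedFDerivWithin ℝ k f (closedBall 0 1) x
          - iteratedFDerivWithin ℝ k f (closedBall 0 1) y‖ / ‖x - y‖ ^ α}

/-- The circle parametrization `θ ↦ φ(e^{iθ})` of a function on the unit circle. -/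
noncomputable def circParam (φ : ℂ → ℂ) : ℝ → ℂ := fun θ => φ (Complex.exp (θ * Complex.I))

/-- Membership in the Hölder space `C^{k,α}(𝕋)`, via the circle parametrization. -/
def MemHolderCircle (k : ℕ) (α : ℝ) (φ : ℂ → ℂ) : Prop :=
  ContDiff ℝ k (circParam φ) ∧
  ∃ C : ℝ, ∀ θ₁ θ₂ : ℝ,
    ‖iteratedDeriv k (circParam φ) θ₁ - iteratedDeriv k (circParam φ) θ₂‖ ≤ C * |θ₁ - θ₂| ^ α

/-- The `C^{k,α}(𝕋)` norm of a function on the unit circle, via the circle parametrization. -/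
noncomputable def circleHolderNorm (k : ℕ) (α : ℝ) (φ : ℂ → ℂ) : ℝ :=
  (∑ j ∈ Finset.range (k + 1),
    sSup ((fun θ => ‖iteratedDeriv j (circParam φ) θ‖) '' Icc 0 (2 * Real.pi))) +
  sSup {c : ℝ | ∃ θ₁ ∈ Icc 0 (2 * Real.pi), ∃ θ₂ ∈ Icc 0 (2 * Real.pi), θ₁ ≠ θ₂ ∧
    c = ‖iteratedDeriv k (circParam φ) θ₁ - iteratedDeriv k (circParam φ) θ₂‖ / |θ₁ - θ₂| ^ α}

/-!
Put `F(z) = ∑ a_n z^n` and `G(z) = z F(z) = ∑ b_N z^N`, so that `G = φ` on the circle and, up to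
`i^k`, the `N^k b_N` are the Fourier coefficients of the `k`-th angular derivative of `φ`. Then
`z^{k+1} F^{(k)}(z) = ∑ m_k(N) N^k b_N z^N` with `m_k(N) = ∏_{l ≤ k} (1 - l/N)`, and `1 - m_k(N)`,
`N ≥ 0`, are the nonnegative Fourier coefficients of an integrable kernel `κ`. Choosing the negative
ones geometric of ratio `r` and applying Cauchy–Schwarz to `κ (1 - r e^{-iθ})` gives
`∫ |κ| ≤ 1.233` and `∫ |κ| |1 - e^{-iθ}| ≤ 1.463 / (k + 1)`. So sup and Hölder bounds pass from
the derivatives of `φ` to those of `F`, the factor `z^{k+1}` being removed by the maximum principle.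

For the Hölder seminorm, two points that differ by a rotation are compared by the sup bound when far
apart and by a bound that also has a linear term when close; balancing the two gives the constant
`6`. The maximum principle, applied to a difference quotient, carries the estimate from rotations to
arbitrary pairs of points of the disc. The derivatives are then uniformly continuous on the disc and
extend to its closure.
-/

/-- The factor `∏_{l=1}^k (1 - l/t)`. At `t = N` it turns the coefficient `N^k b_N` of
`(z d/dz)^k G`, where `G(z) = z F(z) = ∑ b_N z^N`, into that of `z^{k+1} F^{(k)}(z)`.
For `k ≥ 1` the value at `t = 0` is `0`, because `x / 0 = 0`. -/
noncomputable def derivMultiplier (k : ℕ) (t : ℝ) : ℝ := ∏ l ∈ Finset.range k, (t - (l + 1)) / t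

theorem derivMultiplier_natCast_eq_zero {k N : ℕ} (hk : k ≠ 0) (h : N ≤ k) :
    derivMultiplier k N = 0 := by
  refine Finset.prod_eq_zero (i := N - 1) (Finset.mem_range.2 (by lia)) ?_
  rcases N.eq_zero_or_pos with rfl | hN
  · simp
  · simp [Nat.cast_sub hN]

theorem derivMultiplier_nonneg {k : ℕ} {t : ℝ} (h : k ≤ t) : 0 ≤ derivMultiplier k t := by
  refine Finset.prod_nonneg fun l hl ↦ div_nonneg ?_ (k.cast_nonneg.trans h)
  have : (l : ℝ) + 1 ≤ k := mod_cast Finset.mem_range.1 hl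
  linarith

theorem derivMultiplier_natCast_nonneg (k N : ℕ) : 0 ≤ derivMultiplier k N := by
  rcases le_or_gt (k : ℝ) N with h | h
  · exact derivMultiplier_nonneg h
  · have hk : k ≠ 0 := (N.zero_le.trans_lt (mod_cast h)).ne'
    rw [derivMultiplier_natCast_eq_zero hk (mod_cast h.le)]

theorem derivMultiplier_natCast_le_one (k N : ℕ) : derivMultiplier k N ≤ 1 := by
  rcases eq_or_ne k 0 with rfl | hk
  · simp [derivMultiplier]
  rcases le_or_gt N k with h | h
  · simp [derivMultiplier_natCast_eq_zero hk h]
  refine Finset.prod_le_one (fun l hl ↦ ?_) fun l _ ↦ div_le_one_of_le₀ (by linarith) N.cast_nonneg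
  have : (l : ℝ) + 1 ≤ N := mod_cast (Finset.mem_range.1 hl).trans h
  exact div_nonneg (by linarith) N.cast_nonneg

theorem one_sub_derivMultiplier_le {k N : ℕ} (h : k ≤ N) :
    1 - derivMultiplier k N ≤ (k + 1).choose 2 / N := by
  induction k with
  | zero => simp [derivMultiplier]
  | succ k ih =>
    have hN : (0 : ℝ) < N := mod_cast k.succ_pos.trans_le h
    have hfactor : ((N : ℝ) - (k + 1)) / N = 1 - (k + 1) / N := by field_simp
    have hchoose : (((k + 2).choose 2 : ℕ) : ℝ) / N = (k + 1).choose 2 / N + (k + 1) / N := by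
      rw [Nat.choose_succ_succ' (k + 1) 1]
      push_cast [Nat.choose_one_right]
      ring
    have hle : derivMultiplier k N * ((k + 1) / N) ≤ 1 * ((k + 1) / N) := by
      gcongr
      exact derivMultiplier_natCast_le_one k N
    rw [hchoose, derivMultiplier, Finset.prod_range_succ, ← derivMultiplier, hfactor]
    linarith [ih (by lia)]

theorem sum_sq_le_of_le_div {p : ℕ → ℝ} {B : ℕ} (h0 : ∀ N, 0 ≤ p N) (h1 : ∀ N, p N ≤ 1)
    (hB : ∀ N, B < N → p N ≤ B / N) (n : ℕ) : ∑ N ∈ Finset.range n, p N ^ 2 ≤ 2 * B + 1 := by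
  have hhead : ∑ N ∈ Finset.range n with N ≤ B, p N ^ 2 ≤ B + 1 := by
    calc ∑ N ∈ Finset.range n with N ≤ B, p N ^ 2
        ≤ ∑ _ ∈ Finset.range (B + 1), (1 : ℝ) := by
          refine (Finset.sum_le_sum fun N _ ↦ pow_le_one₀ (h0 N) (h1 N)).trans
            (Finset.sum_le_sum_of_subset_of_nonneg (fun _ ↦ ?_) fun _ _ _ ↦ zero_le_one)
          simp only [Finset.mem_filter, Finset.mem_range]
          lia
      _ = B + 1 := by simp
  have htail : ∑ N ∈ Finset.range n with ¬ N ≤ B, p N ^ 2 ≤ B := by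
    rcases B.eq_zero_or_pos with rfl | hBpos
    · refine (Finset.sum_eq_zero fun N hN ↦ ?_).le.trans_eq Nat.cast_zero.symm
      have := hB N (not_le.1 (Finset.mem_filter.1 hN).2)
      rw [le_antisymm (by simpa using this) (h0 N), zero_pow two_ne_zero]
    rcases lt_or_ge n B with hn | hn
    · rw [Finset.filter_false_of_mem fun N hN ↦ by
        simp only [Finset.mem_range] at hN
        lia]
      simp
    calc ∑ N ∈ Finset.range n with ¬ N ≤ B, p N ^ 2
        ≤ ∑ N ∈ Finset.Ioc B n, (B : ℝ) ^ 2 * ((N : ℝ) ^ 2)⁻¹ := by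
          refine (Finset.sum_le_sum fun N hN ↦ ?_).trans
            (Finset.sum_le_sum_of_subset_of_nonneg (fun N ↦ ?_) fun _ _ _ ↦ by positivity)
          · rw [← div_eq_mul_inv, ← div_pow]
            exact pow_le_pow_left₀ (h0 N) (hB N (not_le.1 (Finset.mem_filter.1 hN).2)) 2
          · simp only [Finset.mem_filter, Finset.mem_range, Finset.mem_Ioc]
            lia
      _ ≤ (B : ℝ) ^ 2 * ((B : ℝ)⁻¹ - (n : ℝ)⁻¹) := by
          rw [← Finset.mul_sum]
          gcongr
          exact sum_Ioc_inv_sq_le_sub hBpos.ne' hn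
      _ ≤ (B : ℝ) ^ 2 * (B : ℝ)⁻¹ := by gcongr; simp
      _ = B := by field_simp
  rw [← Finset.sum_filter_add_sum_filter_not _ (· ≤ B)]
  linarith

theorem sum_sq_sub_mul_succ_le {p : ℕ → ℝ} {B S : ℝ} {n : ℕ} (hB : 0 ≤ B) (h0 : p 0 ^ 2 ≤ 1)
    (hp : ∑ N ∈ Finset.range n, p N ^ 2 ≤ 2 * B + 1)
    (hS : ∑ N ∈ Finset.range n, (p N - p (N + 1)) ^ 2 ≤ S) {r : ℝ} (hr : r = 2 * B / (2 * B + 1)) :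
    ∑ N ∈ Finset.range n, (p N - r * p (N + 1)) ^ 2 ≤ 1 - r ^ 2 + r * S := by
  have hr0 : 0 ≤ r := hr ▸ by positivity
  have hr1 : 1 - r = 1 / (2 * B + 1) := by rw [hr]; field_simp; ring
  have hr1' : 0 ≤ 1 - r := hr1 ▸ by positivity
  have htelescope : ∑ N ∈ Finset.range n, (p N ^ 2 - p (N + 1) ^ 2) ≤ 1 := by
    rw [Finset.sum_range_sub']
    linarith [sq_nonneg (p n)]
  calc ∑ N ∈ Finset.range n, (p N - r * p (N + 1)) ^ 2
      = (1 - r) ^ 2 * ∑ N ∈ Finset.range n, p N ^ 2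
          + r * (1 - r) * ∑ N ∈ Finset.range n, (p N ^ 2 - p (N + 1) ^ 2)
          + r * ∑ N ∈ Finset.range n, (p N - p (N + 1)) ^ 2 := by
        simp only [Finset.mul_sum, ← Finset.sum_add_distrib]
        exact Finset.sum_congr rfl fun N _ ↦ by ring
    _ ≤ (1 - r) ^ 2 * (2 * B + 1) + r * (1 - r) * 1 + r * S := by gcongr
    _ = 1 - r ^ 2 + r * S := by
        rw [sq (1 - r), mul_assoc, hr1, one_div_mul_cancel (by positivity), ← hr1]
        ring

/-- A Cauchy–Schwarz inequality `(∫ f')² ≤ (y - x) ∫ f'²` with a majorant `Ψ'` of `f'²`. -/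
theorem sq_sub_le_mul_sub_of_deriv_sq_le {f f' Ψ Ψ' : ℝ → ℝ} {x y : ℝ} (hxy : x ≤ y)
    (hf : ∀ t ∈ Icc x y, HasDerivAt f (f' t) t) (hΨ : ∀ t ∈ Icc x y, HasDerivAt Ψ (Ψ' t) t)
    (h : ∀ t ∈ Icc x y, f' t ^ 2 ≤ Ψ' t) :
    (f y - f x) ^ 2 ≤ (y - x) * (Ψ y - Ψ x) := by
  rcases hxy.eq_or_lt with rfl | hlt
  · simp
  set c := f y - f x
  set δ := y - x
  have hδ : 0 < δ := sub_pos.2 hlt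
  have hderiv : ∀ t ∈ Icc x y, HasDerivAt (fun t ↦ δ ^ 2 * Ψ t - 2 * δ * c * f t + c ^ 2 * t)
      (δ ^ 2 * Ψ' t - 2 * δ * c * f' t + c ^ 2 * 1) t := fun t ht ↦
    (((hΨ t ht).const_mul _).sub ((hf t ht).const_mul _)).add ((hasDerivAt_id t).const_mul _)
  have hmono : MonotoneOn (fun t ↦ δ ^ 2 * Ψ t - 2 * δ * c * f t + c ^ 2 * t) (Icc x y) := by
    refine monotoneOn_of_deriv_nonneg (convex_Icc x y)
      (fun t ht ↦ (hderiv t ht).continuousAt.continuousWithinAt)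
      (fun t ht ↦ (hderiv t (interior_subset ht)).differentiableAt.differentiableWithinAt)
      fun t ht ↦ ?_
    have ht' := interior_subset ht
    rw [(hderiv t ht').deriv]
    nlinarith [mul_le_mul_of_nonneg_left (h t ht') (sq_nonneg δ), sq_nonneg (δ * f' t - c)]
  have hend := hmono (left_mem_Icc.2 hxy) (right_mem_Icc.2 hxy) hxy
  have : δ * c ^ 2 ≤ δ * (δ * (Ψ y - Ψ x)) := by
    simp only [c, δ] at hend ⊢
    linarith
  exact le_of_mul_le_mul_left this hδ

theorem hasDerivAt_derivMultiplier (k : ℕ) {t : ℝ} (ht : t ≠ 0) :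
    HasDerivAt (derivMultiplier k) (∑ j ∈ Finset.range k,
      (∏ l ∈ (Finset.range k).erase j, (t - (l + 1)) / t) * ((j + 1) / t ^ 2)) t := by
  refine HasDerivAt.fun_finsetProd fun j _ ↦ ?_
  refine (((hasDerivAt_id' t).sub_const ((j : ℝ) + 1)).fun_div (hasDerivAt_id' t) ht).congr_deriv ?_
  ring

theorem prod_range_succ_erase_le {f : ℕ → ℝ} {n j : ℕ} (hf : ∀ l ≤ n, 0 ≤ f l)
    (hmin : ∀ l ≤ n, f n ≤ f l) (hj : j ∈ Finset.range (n + 1)) :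
    ∏ l ∈ (Finset.range (n + 1)).erase j, f l ≤ ∏ l ∈ Finset.range n, f l := by
  rw [Finset.range_add_one]
  rcases (Nat.lt_succ_iff.1 (Finset.mem_range.1 hj)).eq_or_lt with rfl | hlt
  · rw [Finset.erase_insert Finset.notMem_range_self]
  rw [Finset.erase_insert_of_ne hlt.ne', Finset.prod_insert (by simp),
    ← Finset.mul_prod_erase _ _ (Finset.mem_range.2 hlt)]
  refine mul_le_mul_of_nonneg_right (hmin j hlt.le) (Finset.prod_nonneg fun l hl ↦ hf l ?_)
  exact (Finset.mem_range.1 (Finset.mem_of_mem_erase hl)).le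

theorem derivMultiplier_sq_le {n : ℕ} {t : ℝ} (hnt : n ≤ t) (ht : 0 < t) :
    derivMultiplier n t ^ 2 ≤ (1 - (n + 1) / (2 * t)) ^ (2 * n) := by
  have hfactor (l : ℕ) (hl : l ∈ Finset.range n) : 0 ≤ (t - (l + 1)) / t := by
    have : (l : ℝ) + 1 ≤ n := mod_cast Finset.mem_range.1 hl
    exact div_nonneg (by linarith) ht.le
  calc derivMultiplier n t ^ 2
      = ∏ l ∈ Finset.range n, (t - ((n - 1 - l : ℕ) + 1)) / t * ((t - (l + 1)) / t) := by
        rw [Finset.prod_mul_distrib, Finset.prod_range_reflect fun l : ℕ ↦ (t - (l + 1)) / t, sq,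
          derivMultiplier]
    _ ≤ ∏ l ∈ Finset.range n, (1 - (n + 1) / (2 * t)) ^ 2 := by
        refine Finset.prod_le_prod (fun l hl ↦ mul_nonneg (hfactor _ ?_) (hfactor l hl))
          fun l hl ↦ ?_
        · simp only [Finset.mem_range] at hl ⊢
          lia
        · have hcast : ((n - 1 - l : ℕ) : ℝ) = n - 1 - l := by
            rw [Finset.mem_range] at hl
            rw [Nat.sub_sub, Nat.cast_sub (by lia)]
            push_cast
            ring
          have hmean : 1 - (n + 1) / (2 * t)
              = ((t - ((n - 1 - l : ℕ) + 1)) / t + (t - (l + 1)) / t) / 2 := by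
            rw [hcast]
            field_simp
            ring
          rw [hmean]
          nlinarith [sq_nonneg ((t - ((n - 1 - l : ℕ) + 1)) / t - (t - (l + 1)) / t)]
    _ = (1 - (n + 1) / (2 * t)) ^ (2 * n) := by
        rw [Finset.prod_const, Finset.card_range, pow_mul]

theorem derivMultiplier_deriv_sq_le {n : ℕ} {t : ℝ} (ht : n + 1 ≤ t) :
    (∑ j ∈ Finset.range (n + 1),
      (∏ l ∈ (Finset.range (n + 1)).erase j, (t - (l + 1)) / t) * ((j + 1) / t ^ 2)) ^ 2 ≤
    ((n + 2).choose 2 / t ^ 2) ^ 2 * (1 - (n + 1) / (2 * t)) ^ (2 * n) := by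
  have ht0 : 0 < t := by linarith [n.cast_nonneg (α := ℝ)]
  have hfactor (l : ℕ) (hl : l ≤ n) : 0 ≤ (t - (l + 1)) / t := by
    have : (l : ℝ) ≤ n := mod_cast hl
    exact div_nonneg (by linarith) ht0.le
  have hmin (l : ℕ) (hl : l ≤ n) : (t - (n + 1)) / t ≤ (t - (l + 1)) / t := by gcongr
  have hchoose : ∑ j ∈ Finset.range (n + 1), ((j : ℝ) + 1) = (n + 2).choose 2 := by
    rw [Nat.choose_two_right, ← Finset.sum_range_id, Finset.sum_range_succ' fun i : ℕ ↦ i]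
    push_cast
    rw [add_zero]
  have hderiv : ∑ j ∈ Finset.range (n + 1),
      (∏ l ∈ (Finset.range (n + 1)).erase j, (t - (l + 1)) / t) * ((j + 1) / t ^ 2) ≤
      (n + 2).choose 2 / t ^ 2 * derivMultiplier n t := by
    rw [← hchoose, Finset.sum_div, Finset.sum_mul]
    refine Finset.sum_le_sum fun j hj ↦ ?_
    rw [mul_comm]
    gcongr
    exact prod_range_succ_erase_le hfactor hmin hj
  calc _ ≤ ((n + 2).choose 2 / t ^ 2 * derivMultiplier n t) ^ 2 := by
        refine pow_le_pow_left₀ (Finset.sum_nonneg fun j _ ↦ mul_nonneg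
          (Finset.prod_nonneg fun l hl ↦ hfactor l ?_) (by positivity)) hderiv 2
        exact Nat.lt_succ_iff.1 (Finset.mem_range.1 (Finset.mem_of_mem_erase hl))
    _ ≤ _ := by
        rw [mul_pow]
        gcongr
        exact derivMultiplier_sq_le (by linarith) ht0

/-- The primitive of `w ↦ -w² (1 - w)^m` vanishing at `1`, obtained by integrating by parts. -/
noncomputable def sqMulPowPrimitive (m : ℕ) (w : ℝ) : ℝ :=
  w ^ 2 * (1 - w) ^ (m + 1) / (m + 1) + 2 * w * (1 - w) ^ (m + 2) / ((m + 1) * (m + 2)) +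
    2 * (1 - w) ^ (m + 3) / ((m + 1) * (m + 2) * (m + 3))

theorem hasDerivAt_sqMulPowPrimitive (m : ℕ) (w : ℝ) :
    HasDerivAt (sqMulPowPrimitive m) (-(w ^ 2 * (1 - w) ^ m)) w := by
  have hpow (e : ℕ) := ((hasDerivAt_id' w).const_sub 1).fun_pow e
  have hfirst := (((hasDerivAt_id' w).fun_pow 2).fun_mul (hpow (m + 1))).div_const ((m : ℝ) + 1)
  have hsecond := (((hasDerivAt_id' w).const_mul 2).fun_mul (hpow (m + 2))).div_const
    (((m : ℝ) + 1) * (m + 2))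
  have hthird := ((hpow (m + 3)).const_mul 2).div_const (((m : ℝ) + 1) * (m + 2) * (m + 3))
  refine ((hfirst.fun_add hsecond).fun_add hthird).congr_deriv ?_
  rw [Nat.add_sub_cancel, show m + 2 - 1 = m + 1 from rfl, show m + 3 - 1 = m + 2 from rfl]
  push_cast
  field_simp
  ring

theorem sqMulPowPrimitive_le_zero {m : ℕ} {w : ℝ} (h0 : 0 ≤ w) (h1 : w ≤ 1) :
    sqMulPowPrimitive m w ≤ sqMulPowPrimitive m 0 := by
  refine antitoneOn_of_deriv_nonpos (convex_Icc 0 1)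
    (fun w _ ↦ (hasDerivAt_sqMulPowPrimitive m w).continuousAt.continuousWithinAt)
    (fun w _ ↦ (hasDerivAt_sqMulPowPrimitive m w).differentiableAt.differentiableWithinAt)
    (fun w hw ↦ ?_) (left_mem_Icc.2 zero_le_one) ⟨h0, h1⟩ h0
  rw [interior_Icc] at hw
  rw [(hasDerivAt_sqMulPowPrimitive m w).deriv, neg_nonpos]
  exact mul_nonneg (sq_nonneg w) (pow_nonneg (by linarith [hw.2]) m)

theorem derivMultiplier_sub_sq_le {n : ℕ} {x : ℝ} (hx : n + 1 ≤ x) :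
    (derivMultiplier (n + 1) (x + 1) - derivMultiplier (n + 1) x) ^ 2 ≤
    8 * (n + 2).choose 2 ^ 2 / (n + 1) ^ 3 *
      (sqMulPowPrimitive (2 * n) ((n + 1) / (2 * (x + 1)))
        - sqMulPowPrimitive (2 * n) ((n + 1) / (2 * x))) := by
  have hpos (t : ℝ) (ht : t ∈ Icc x (x + 1)) : 0 < t := by
    linarith [ht.1, n.cast_nonneg (α := ℝ)]
  convert sq_sub_le_mul_sub_of_deriv_sq_le (f := derivMultiplier (n + 1))
    (Ψ := fun t ↦ 8 * (n + 2).choose 2 ^ 2 / (n + 1) ^ 3 *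
      sqMulPowPrimitive (2 * n) ((n + 1) / (2 * t)))
    (Ψ' := fun t ↦ ((n + 2).choose 2 / t ^ 2) ^ 2 * (1 - (n + 1) / (2 * t)) ^ (2 * n))
    (le_add_of_nonneg_right zero_le_one)
    (fun t ht ↦ hasDerivAt_derivMultiplier (n + 1) (hpos t ht).ne') (fun t ht ↦ ?_)
    (fun t ht ↦ derivMultiplier_deriv_sq_le (hx.trans ht.1)) using 1
  · ring
  have ht0 := (hpos t ht).ne'
  have hw : HasDerivAt (fun t : ℝ ↦ ((n : ℝ) + 1) / (2 * t)) (-((n + 1) / (2 * t ^ 2))) t := by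
    refine ((((hasDerivAt_id' t).const_mul 2).fun_inv (mul_ne_zero two_ne_zero ht0)).const_mul
      ((n : ℝ) + 1)).congr_deriv ?_
    field_simp
  refine (((hasDerivAt_sqMulPowPrimitive (2 * n) _).comp t hw).const_mul
    (8 * ((n + 2).choose 2 : ℝ) ^ 2 / (n + 1) ^ 3)).congr_deriv ?_
  field_simp
  ring

theorem sum_derivMultiplier_sub_sq_le (n m : ℕ) :
    ∑ N ∈ Finset.range m, (derivMultiplier (n + 1) (N + 1 : ℕ) - derivMultiplier (n + 1) N) ^ 2 ≤
    8 * (n + 2).choose 2 ^ 2 / (n + 1) ^ 3 *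
      (sqMulPowPrimitive (2 * n) 0 - sqMulPowPrimitive (2 * n) (1 / 2)) := by
  set Ψ : ℕ → ℝ := fun N ↦ 8 * (n + 2).choose 2 ^ 2 / (n + 1) ^ 3 *
    sqMulPowPrimitive (2 * n) ((n + 1) / (2 * (N : ℝ))) with hΨ
  have hbound (N : ℕ) (hN : n + 1 ≤ N) : Ψ N ≤
      8 * (n + 2).choose 2 ^ 2 / (n + 1) ^ 3 * sqMulPowPrimitive (2 * n) 0 := by
    refine mul_le_mul_of_nonneg_left (sqMulPowPrimitive_le_zero (by positivity) ?_) (by positivity)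
    have : (n : ℝ) + 1 ≤ N := mod_cast hN
    exact div_le_one_of_le₀ (by linarith [n.cast_nonneg (α := ℝ)]) (by positivity)
  have hstart : Ψ (n + 1) =
      8 * (n + 2).choose 2 ^ 2 / (n + 1) ^ 3 * sqMulPowPrimitive (2 * n) (1 / 2) := by
    simp only [hΨ]
    congr 2
    push_cast
    field_simp
  have hzero (m : ℕ) (hm : m ≤ n + 1) : ∑ N ∈ Finset.range m,
      (derivMultiplier (n + 1) (N + 1 : ℕ) - derivMultiplier (n + 1) N) ^ 2 = 0 := by
    refine Finset.sum_eq_zero fun N hN ↦ ?_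
    have := Finset.mem_range.1 hN
    rw [derivMultiplier_natCast_eq_zero n.succ_ne_zero (by lia),
      derivMultiplier_natCast_eq_zero n.succ_ne_zero (by lia)]
    norm_num
  rw [mul_sub, ← hstart]
  rcases le_total m (n + 1) with hm | hm
  · rw [hzero m hm]
    exact sub_nonneg.2 (hbound (n + 1) le_rfl)
  refine le_trans ?_ (sub_le_sub_right (hbound m hm) _)
  induction m, hm using Nat.le_induction with
  | base => rw [hzero _ le_rfl, sub_self]
  | succ m hm ih =>
    have hstep := derivMultiplier_sub_sq_le (n := n) (x := m) (mod_cast hm)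
    rw [mul_sub] at hstep
    rw [Finset.sum_range_succ]
    simp only [hΨ] at ih ⊢
    push_cast at hstep ih ⊢
    linarith

theorem sqMulPowPrimitive_sub_le {n : ℕ} :
    8 * ((n + 2).choose 2 : ℝ) ^ 2 / (n + 1) ^ 3 *
      (sqMulPowPrimitive (2 * n) 0 - sqMulPowPrimitive (2 * n) (1 / 2)) ≤
    2 * (n + 2) ^ 2 / ((n + 1) ^ 2 * ((2 * n + 1) * (2 * n + 3))) := by
  have hhalf : 0 ≤ sqMulPowPrimitive (2 * n) (1 / 2) := by
    unfold sqMulPowPrimitive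
    positivity
  calc _ ≤ 8 * ((n + 2).choose 2 : ℝ) ^ 2 / (n + 1) ^ 3 * sqMulPowPrimitive (2 * n) 0 := by
        gcongr
        exact sub_le_self _ hhalf
    _ = _ := by
        rw [Nat.cast_choose_two, sqMulPowPrimitive]
        push_cast
        field_simp
        ring

theorem exists_sum_derivMultiplier_sub_sq_le {k : ℕ} (hk : k ≠ 0) {B : ℝ}
    (hB : B = (k + 1).choose 2) :
    ∃ S : ℝ, (∀ m, ∑ N ∈ Finset.range m,
      (derivMultiplier k (N + 1 : ℕ) - derivMultiplier k N) ^ 2 ≤ S) ∧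
      S * (B * (4 * B + 2)) ≤ 0.52 * (4 * B + 1) ∧
      (k + 1) ^ 2 * (S + 1 / (4 * B + 1)) ≤ 2.14 := by
  obtain ⟨n, rfl⟩ := Nat.exists_eq_succ_of_ne_zero hk
  obtain rfl : B = (n + 1) * (n + 2) / 2 := by
    rw [hB, Nat.succ_eq_add_one, Nat.cast_choose_two]
    push_cast
    ring
  -- For `n ≥ 3` the bounds survive dropping the value of the primitive at `1/2`.
  rcases lt_or_ge n 3 with hn | hn
  · refine ⟨_, sum_derivMultiplier_sub_sq_le n, ?_⟩
    interval_cases n <;> norm_num [sqMulPowPrimitive, Nat.cast_choose_two]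
  obtain ⟨n, rfl⟩ := Nat.exists_eq_add_of_le' hn
  refine ⟨_, fun m ↦ (sum_derivMultiplier_sub_sq_le (n + 3) m).trans sqMulPowPrimitive_sub_le, ?_⟩
  push_cast
  constructor <;>
  · rw [← sub_nonneg]
    field_simp
    ring_nf
    positivity

section Lp

variable {X : Type*} [MeasurableSpace X] {μ : Measure X}

theorem memLp_mul_of_continuous [TopologicalSpace X] [CompactSpace X] [OpensMeasurableSpace X]
    {f g : X → ℂ} {p : ENNReal} (hf : MemLp f p μ) (hg : Continuous g) :
    MemLp (fun t ↦ f t * g t) p μ := by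
  obtain ⟨C, hC⟩ := (isCompact_range hg).isBounded.exists_norm_le
  exact (memLp_top_of_bound hg.aestronglyMeasurable C
    (.of_forall fun t ↦ hC _ (mem_range_self t))).mul hf

theorem sq_integral_norm_mul_norm_le {E : Type*} [NormedAddCommGroup E] {f g : X → E}
    (hf : MemLp f 2 μ) (hg : MemLp g 2 μ) :
    (∫ x, ‖f x‖ * ‖g x‖ ∂μ) ^ 2 ≤ (∫ x, ‖f x‖ ^ 2 ∂μ) * ∫ x, ‖g x‖ ^ 2 ∂μ := by
  have h := integral_mul_norm_le_Lp_mul_Lq (μ := μ) (f := f) (g := g) Real.HolderConjugate.two_two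
    (by simpa using hf) (by simpa using hg)
  simp only [Real.rpow_two, ← Real.sqrt_eq_rpow] at h
  rw [← Real.sqrt_mul (by positivity)] at h
  exact (Real.le_sqrt (by positivity) (by positivity)).1 h

end Lp

section FourierCoefficients

open AddCircle

variable {T : ℝ}

theorem norm_fourier_apply (n : ℤ) (t : AddCircle T) : ‖fourier n t‖ = 1 := by
  rw [fourier_apply, Circle.norm_coe]

variable [Fact (0 < T)]

theorem exists_memLp_two_fourierCoeff_eq {c : ℤ → ℂ} (hc : Summable fun n ↦ ‖c n‖ ^ 2) :
    ∃ f : AddCircle T → ℂ, MemLp f 2 haarAddCircle ∧ ∀ n, fourierCoeff f n = c n := by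
  let x : lp (fun _ : ℤ ↦ ℂ) 2 := ⟨c, memℓp_gen (by simpa using hc)⟩
  refine ⟨_, Lp.memLp (fourierBasis.repr.symm x), fun n ↦ ?_⟩
  rw [← fourierBasis_repr, LinearIsometryEquiv.apply_symm_apply]

theorem hasSum_norm_fourierCoeff_sq {f : AddCircle T → ℂ} (hf : MemLp f 2 haarAddCircle) :
    HasSum (fun n ↦ ‖fourierCoeff f n‖ ^ 2) (∫ t, ‖f t‖ ^ 2 ∂haarAddCircle) := by
  have hint : ∫ t, ‖f t‖ ^ 2 ∂haarAddCircle = ∫ t, ‖hf.toLp f t‖ ^ 2 ∂haarAddCircle :=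
    integral_congr_ae (hf.coeFn_toLp.symm.fun_comp (‖·‖ ^ 2))
  rw [← fourierCoeff_congr_ae hf.coeFn_toLp, hint]
  exact hasSum_sq_fourierCoeff hf.toLp

theorem ae_eq_of_fourierCoeff_eq {f g : AddCircle T → ℂ} (hf : MemLp f 2 haarAddCircle)
    (hg : MemLp g 2 haarAddCircle) (h : ∀ n, fourierCoeff f n = fourierCoeff g n) :
    f =ᵐ[haarAddCircle] g := by
  refine (MemLp.toLp_eq_toLp_iff hf hg).1 (fourierBasis.repr.injective (lp.ext (funext fun n ↦ ?_)))
  rw [fourierBasis_repr, fourierBasis_repr, fourierCoeff_congr_ae hf.coeFn_toLp,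
    fourierCoeff_congr_ae hg.coeFn_toLp, h]

theorem fourierCoeff_mul_one_sub {f : AddCircle T → ℂ} (hf : Integrable f haarAddCircle) (a : ℂ)
    (n : ℤ) : fourierCoeff (fun t ↦ f t * (1 - a * fourier (-1) t)) n =
      fourierCoeff f n - a * fourierCoeff f (n + 1) := by
  have hsplit (t : AddCircle T) : fourier (-n) t • (f t * (1 - a * fourier (-1) t)) =
      fourier (-n) t • f t - a * (fourier (-(n + 1)) t • f t) := by
    rw [neg_add, fourier_add, smul_eq_mul, smul_eq_mul]
    ring
  simp only [fourierCoeff, hsplit]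
  rw [integral_sub (hf.fourier_smul _) ((hf.fourier_smul _).const_mul _), integral_const_mul]

theorem integral_norm_mul_one_sub_sq {f : AddCircle T → ℂ} (hf : MemLp f 2 haarAddCircle) (a : ℂ) :
    ∫ t, ‖f t * (1 - a * fourier (-1) t)‖ ^ 2 ∂haarAddCircle =
      ∑' n, ‖fourierCoeff f n - a * fourierCoeff f (n + 1)‖ ^ 2 := by
  rw [← (hasSum_norm_fourierCoeff_sq (memLp_mul_of_continuous hf (by fun_prop))).tsum_eq]
  simp only [fourierCoeff_mul_one_sub (hf.integrable one_le_two)]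

theorem hasSum_int_pow_neg {r : ℝ} (hr0 : 0 ≤ r) (hr1 : r < 1) :
    HasSum (fun n : ℤ ↦ ‖if n ≤ 0 then (r : ℂ) ^ n.natAbs else 0‖ ^ 2) (1 - r ^ 2)⁻¹ := by
  have hr2 : r ^ 2 < 1 := by nlinarith
  have hsum : (1 - r ^ 2)⁻¹ = 1 + r ^ 2 * (1 - r ^ 2)⁻¹ := by
    have : 1 - r ^ 2 ≠ 0 := by linarith
    field_simp
    ring
  rw [hsum]
  refine HasSum.of_nat_of_neg_add_one ?_ ?_
  · exact (hasSum_ite_eq (0 : ℕ) (1 : ℝ)).congr_fun fun n ↦ by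
      rcases eq_or_ne n 0 with rfl | hn <;> simp [*]
  · refine ((hasSum_geometric_of_lt_one (sq_nonneg r) hr2).mul_left (r ^ 2)).congr_fun fun n ↦ ?_
    have : (-((n : ℤ) + 1)).natAbs = n + 1 := by lia
    rw [if_pos (by lia), this, norm_pow, Complex.norm_real, Real.norm_of_nonneg hr0]
    ring

/-- Up to a null set, `f` is `(1 - r e^{-iθ})⁻¹ = ∑_j r^j e^{-ijθ}`. -/
theorem exists_mul_one_sub_eq_one {r : ℝ} (hr0 : 0 ≤ r) (hr1 : r < 1) :
    ∃ f : AddCircle T → ℂ, MemLp f 2 haarAddCircle ∧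
      (∀ᵐ t ∂haarAddCircle, f t * (1 - r * fourier (-1) t) = 1) ∧
      ∫ t, ‖f t‖ ^ 2 ∂haarAddCircle = (1 - r ^ 2)⁻¹ := by
  obtain ⟨f, hf, hfc⟩ := exists_memLp_two_fourierCoeff_eq (T := T)
    (hasSum_int_pow_neg hr0 hr1).summable
  refine ⟨f, hf, ?_, ?_⟩
  · refine ae_eq_of_fourierCoeff_eq (g := fun _ ↦ 1) (memLp_mul_of_continuous hf (by fun_prop))
      (memLp_const 1) fun n ↦ ?_
    have h1 : fourierCoeff (fun _ : AddCircle T ↦ (1 : ℂ)) n = if n = 0 then 1 else 0 := by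
      rw [← Pi.single_apply, ← fourierCoeff_fourier (T := T)]
      simp [fourierCoeff]
    rw [fourierCoeff_mul_one_sub (hf.integrable one_le_two), hfc, hfc, h1]
    rcases lt_trichotomy n 0 with hn | rfl | hn
    · have : n.natAbs = (n + 1).natAbs + 1 := by lia
      rw [if_pos hn.le, if_pos (by lia), if_neg hn.ne, this, pow_succ']
      ring
    · simp
    · rw [if_neg (by lia), if_neg (by lia), if_neg hn.ne']
      ring
  · rw [← (hasSum_norm_fourierCoeff_sq hf).tsum_eq]
    simp only [hfc]
    exact (hasSum_int_pow_neg hr0 hr1).tsum_eq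

/-- The division by `1 - r e^{-iθ}` costs the `L²` norm `(1 - r²)^{-1/2}` of its inverse. -/
theorem sq_integral_norm_le {κ : AddCircle T → ℂ} (hκ : MemLp κ 2 haarAddCircle) {r : ℝ}
    (hr0 : 0 ≤ r) (hr1 : r < 1) :
    (∫ t, ‖κ t‖ ∂haarAddCircle) ^ 2 ≤
      (∑' n, ‖fourierCoeff κ n - r * fourierCoeff κ (n + 1)‖ ^ 2) / (1 - r ^ 2) := by
  obtain ⟨f, hf, hf1, hfi⟩ := exists_mul_one_sub_eq_one (T := T) hr0 hr1
  have hsplit : ∫ t, ‖κ t‖ ∂haarAddCircle =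
      ∫ t, ‖κ t * (1 - r * fourier (-1) t)‖ * ‖f t‖ ∂haarAddCircle := by
    refine integral_congr_ae (hf1.mono fun t ht ↦ ?_)
    dsimp only
    rw [← norm_mul, mul_assoc, mul_comm _ (f t), ht, mul_one]
  rw [hsplit, div_eq_mul_inv, ← hfi, ← integral_norm_mul_one_sub_sq hκ]
  exact sq_integral_norm_mul_norm_le (memLp_mul_of_continuous hκ (by fun_prop)) hf

theorem sq_integral_norm_mul_norm_one_sub_le {κ : AddCircle T → ℂ} (hκ : MemLp κ 2 haarAddCircle) :
    (∫ t, ‖κ t‖ * ‖1 - fourier (-1) t‖ ∂haarAddCircle) ^ 2 ≤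
      ∑' n, ‖fourierCoeff κ n - fourierCoeff κ (n + 1)‖ ^ 2 := by
  have h := sq_integral_norm_mul_norm_le
    (memLp_mul_of_continuous hκ (g := fun t ↦ 1 - 1 * fourier (-1) t) (by fun_prop))
    (memLp_const (1 : ℂ))
  rw [integral_norm_mul_one_sub_sq hκ 1] at h
  simpa using h

end FourierCoefficients

section Kernel

open AddCircle

theorem tsum_norm_sub_mul_succ_sq_le {c : ℤ → ℂ} {p : ℕ → ℝ} {r s W : ℝ} (hr0 : 0 ≤ r) (hr1 : r < 1)
    (hp : ∀ N : ℕ, c N = p N) (hr : ∀ j : ℕ, c (-(j + 1)) = r ^ (j + 1)) (h0 : p 0 = 1)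
    (hW : ∀ n, ∑ N ∈ Finset.range n, (p N - s * p (N + 1)) ^ 2 ≤ W) :
    ∑' n, ‖c n - s * c (n + 1)‖ ^ 2 ≤ W + (r - s) ^ 2 / (1 - r ^ 2) := by
  have hpos (N : ℕ) : ‖c N - s * c (N + 1)‖ ^ 2 = (p N - s * p (N + 1)) ^ 2 := by
    rw [hp, ← Nat.cast_succ, hp, ← Complex.ofReal_mul, ← Complex.ofReal_sub, Complex.norm_real,
      Real.norm_eq_abs, sq_abs]
  have hneg (j : ℕ) : ‖c (-(j + 1)) - s * c (-(j + 1) + 1)‖ ^ 2 = (r - s) ^ 2 * (r ^ 2) ^ j := by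
    have hj : c (-(j + 1) + 1) = r ^ j := by
      rcases j with _ | j
      · simpa [h0] using hp 0
      · rw [← hr]
        congr 1
    rw [hr, hj, pow_succ' (r : ℂ), ← sub_mul, norm_mul, norm_pow, ← Complex.ofReal_sub,
      Complex.norm_real, Complex.norm_real, mul_pow, ← pow_mul, mul_comm j, pow_mul,
      Real.norm_eq_abs, Real.norm_eq_abs, sq_abs, sq_abs]
  have hgeom := (hasSum_geometric_of_lt_one (sq_nonneg r) (by nlinarith)).mul_left ((r - s) ^ 2)
  rw [tsum_of_nat_of_neg_add_one]
  · simp only [hpos, hneg, hgeom.tsum_eq, ← div_eq_mul_inv]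
    gcongr
    exact Real.tsum_le_of_sum_range_le (fun N ↦ sq_nonneg _) hW
  · simp only [hpos]
    exact summable_of_sum_range_le (fun N ↦ sq_nonneg _) hW
  · simpa only [hneg] using hgeom.summable

/-- The coefficients of negative index are free; the powers of `r` make them invisible after the
multiplication by `1 - r e^{-iθ}`. -/
theorem exists_fourierCoeff_eq_of_sum_sq_le {T : ℝ} [Fact (0 < T)] {p : ℕ → ℝ} {r V S : ℝ}
    (h0 : p 0 = 1) (hr0 : 0 ≤ r) (hr1 : r < 1) (hp : Summable fun N ↦ p N ^ 2)
    (hV : ∀ n, ∑ N ∈ Finset.range n, (p N - r * p (N + 1)) ^ 2 ≤ V)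
    (hS : ∀ n, ∑ N ∈ Finset.range n, (p N - p (N + 1)) ^ 2 ≤ S) :
    ∃ κ : AddCircle T → ℂ, Integrable κ haarAddCircle ∧ (∀ N : ℕ, fourierCoeff κ N = p N) ∧
      (∫ t, ‖κ t‖ ∂haarAddCircle) ^ 2 ≤ V / (1 - r ^ 2) ∧
      (∫ t, ‖κ t‖ * ‖1 - fourier (-1) t‖ ∂haarAddCircle) ^ 2 ≤ S + (1 - r) ^ 2 / (1 - r ^ 2) := by
  let c : ℤ → ℂ
    | .ofNat N => p N
    | .negSucc j => r ^ (j + 1)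
  have hcp (N : ℕ) : c N = p N := rfl
  have hcr (j : ℕ) : c (-(j + 1)) = r ^ (j + 1) := by rw [← Int.negSucc_eq]
  have hgeom := (summable_geometric_of_lt_one (sq_nonneg r) (by nlinarith)).mul_left (r ^ 2)
  obtain ⟨κ, hκ, hκc⟩ := exists_memLp_two_fourierCoeff_eq (T := T) (c := c) (by
    refine .of_nat_of_neg_add_one (by simpa [hcp] using hp) (hgeom.congr fun j ↦ ?_)
    rw [hcr, norm_pow, Complex.norm_real, Real.norm_of_nonneg hr0]
    ring)
  refine ⟨κ, hκ.integrable one_le_two, fun N ↦ by rw [hκc, hcp], ?_, ?_⟩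
  · refine (sq_integral_norm_le hκ hr0 hr1).trans ?_
    have h := tsum_norm_sub_mul_succ_sq_le hr0 hr1 hcp hcr h0 hV
    rw [sub_self, zero_pow two_ne_zero, zero_div, add_zero] at h
    simp only [hκc]
    gcongr
    nlinarith
  · refine (sq_integral_norm_mul_norm_one_sub_le hκ).trans ?_
    have h := tsum_norm_sub_mul_succ_sq_le (s := 1) (W := S) hr0 hr1 hcp hcr h0 (by simpa using hS)
    rw [← neg_sub, neg_sq] at h
    simpa only [hκc, Complex.ofReal_one, one_mul] using h

theorem exists_fourierCoeff_eq_one_sub_derivMultiplier {T : ℝ} [Fact (0 < T)] {k : ℕ} (hk : k ≠ 0) :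
    ∃ κ : AddCircle T → ℂ, Integrable κ haarAddCircle ∧
      (∀ N : ℕ, fourierCoeff κ N = ((1 - derivMultiplier k N : ℝ) : ℂ)) ∧
      ∫ t, ‖κ t‖ ∂haarAddCircle ≤ 1.233 ∧
      (k + 1) * ∫ t, ‖κ t‖ * ‖1 - fourier (-1) t‖ ∂haarAddCircle ≤ 1.463 := by
  let p (N : ℕ) : ℝ := 1 - derivMultiplier k N
  have hp0 : p 0 = 1 := sub_eq_self.2 (derivMultiplier_natCast_eq_zero hk (Nat.zero_le k))
  set b := (k + 1).choose 2
  obtain ⟨S, hS, hSB, hSk⟩ := exists_sum_derivMultiplier_sub_sq_le hk (B := b) rfl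
  have hkb : k ≤ b := by simp [b, Nat.choose_succ_succ]
  have hb : (1 : ℝ) ≤ b := mod_cast Nat.choose_pos (by lia)
  have hp : ∀ n, ∑ N ∈ Finset.range n, p N ^ 2 ≤ 2 * b + 1 :=
    sum_sq_le_of_le_div (fun N ↦ sub_nonneg.2 (derivMultiplier_natCast_le_one k N))
      (fun N ↦ sub_le_self _ (derivMultiplier_natCast_nonneg k N))
      fun N hN ↦ one_sub_derivMultiplier_le (hkb.trans hN.le)
  have hpS (n : ℕ) : ∑ N ∈ Finset.range n, (p N - p (N + 1)) ^ 2 ≤ S := by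
    simpa [p] using hS n
  set r : ℝ := 2 * b / (2 * b + 1) with hr
  have hr1 : 1 - r = 1 / (2 * b + 1) := by rw [hr]; field_simp; ring
  have hr2 : 1 - r ^ 2 = (4 * b + 1) / (2 * b + 1) ^ 2 := by rw [hr]; field_simp; ring
  obtain ⟨κ, hκ, hκc, hκ1, hκ2⟩ := exists_fourierCoeff_eq_of_sum_sq_le (T := T) hp0 (r := r)
    (by positivity) (by rw [hr, div_lt_one] <;> linarith)
    (summable_of_sum_range_le (fun N ↦ sq_nonneg _) hp)
    (fun n ↦ sum_sq_sub_mul_succ_le (by positivity) (by simp [hp0]) (hp n) (hpS n) hr) hpS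
  refine ⟨κ, hκ, hκc, ?_, ?_⟩
  · refine le_of_sq_le_sq (hκ1.trans ?_) (by norm_num)
    have hV : (1 - r ^ 2 + r * S) / (1 - r ^ 2) = 1 + S * (b * (4 * b + 2)) / (4 * b + 1) := by
      rw [hr2, hr]
      field_simp
      ring
    rw [hV]
    have := div_le_of_le_mul₀ (by positivity) (by norm_num) hSB
    linarith
  · have hneg : (1 - r) ^ 2 / (1 - r ^ 2) = 1 / (4 * b + 1) := by
      rw [hr1, hr2]
      field_simp
    rw [hneg] at hκ2
    refine le_of_sq_le_sq ?_ (by norm_num)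
    calc _ = (k + 1 : ℝ) ^ 2 * _ := mul_pow ..
      _ ≤ (k + 1) ^ 2 * (S + 1 / (4 * b + 1)) := by gcongr
      _ ≤ 1.463 ^ 2 := by linarith

end Kernel

section PowerSeries

variable {v : ℕ → ℂ} {z : ℂ}

theorem mul_mem_ball_zero_one {ω : ℂ} (hω : ‖ω‖ = 1) (hz : z ∈ ball (0 : ℂ) 1) :
    z * ω ∈ ball (0 : ℂ) 1 := by
  rwa [mem_ball_zero_iff, norm_mul, hω, mul_one, ← mem_ball_zero_iff]

theorem summable_norm_mul_pow (hv : Summable fun N ↦ ‖v N‖) (hz : ‖z‖ ≤ 1) :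
    Summable fun N ↦ v N * z ^ N := by
  refine .of_norm_bounded hv fun N ↦ ?_
  rw [norm_mul, norm_pow]
  exact mul_le_of_le_one_right (norm_nonneg _) (pow_le_one₀ (norm_nonneg _) hz)

theorem exists_ball_summable_norm_le (hv : ∀ z ∈ ball (0 : ℂ) 1, Summable fun N ↦ v N * z ^ N)
    (hz : z ∈ ball (0 : ℂ) 1) : ∃ r, z ∈ ball (0 : ℂ) r ∧ ∃ u : ℕ → ℝ, Summable u ∧
      ∀ N, ∀ w ∈ ball (0 : ℂ) r, ‖v N * w ^ N‖ ≤ u N := by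
  obtain ⟨r, hzr, hr1⟩ := exists_between (mem_ball_zero_iff.1 hz)
  have hr : ‖(r : ℂ)‖ = r := by
    rw [Complex.norm_real, Real.norm_of_nonneg ((norm_nonneg z).trans hzr.le)]
  refine ⟨r, mem_ball_zero_iff.2 hzr, _, (hv r (by rwa [mem_ball_zero_iff, hr])).norm,
    fun N w hw ↦ ?_⟩
  rw [norm_mul, norm_mul, norm_pow, norm_pow, hr]
  gcongr
  exact (mem_ball_zero_iff.1 hw).le

theorem differentiableOn_tsum_mul_pow (hv : ∀ z ∈ ball (0 : ℂ) 1, Summable fun N ↦ v N * z ^ N) :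
    DifferentiableOn ℂ (fun z ↦ ∑' N, v N * z ^ N) (ball 0 1) := fun z hz ↦ by
  obtain ⟨r, hzr, u, hu, hvu⟩ := exists_ball_summable_norm_le hv hz
  have h := Complex.differentiableOn_tsum_of_summable_norm hu (fun N ↦ by fun_prop) isOpen_ball hvu
  exact (h.differentiableAt (isOpen_ball.mem_nhds hzr)).differentiableWithinAt

theorem hasSum_natCast_mul_mul_pow (hv : ∀ z ∈ ball (0 : ℂ) 1, Summable fun N ↦ v N * z ^ N)
    (hz : z ∈ ball (0 : ℂ) 1) :
    HasSum (fun N ↦ N * v N * z ^ N) (z * deriv (fun z ↦ ∑' N, v N * z ^ N) z) := by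
  obtain ⟨r, hzr, u, hu, hvu⟩ := exists_ball_summable_norm_le hv hz
  have h := Complex.hasSum_deriv_of_summable_norm hu (fun N ↦ by fun_prop) isOpen_ball hvu hzr
  refine (h.mul_left z).congr_fun fun N ↦ ?_
  rw [deriv_const_mul _ (by fun_prop), deriv_pow_field]
  rcases N with _ | N
  · simp
  · simp only [Nat.add_sub_cancel]
    ring

theorem summable_natCast_pow_mul_mul_pow
    (hv : ∀ z ∈ ball (0 : ℂ) 1, Summable fun N ↦ v N * z ^ N) (j : ℕ) (hz : z ∈ ball (0 : ℂ) 1) :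
    Summable fun N : ℕ ↦ (N : ℂ) ^ j * v N * z ^ N := by
  induction j generalizing z with
  | zero => simpa using hv z hz
  | succ j ih =>
    simpa only [pow_succ', mul_assoc] using (hasSum_natCast_mul_mul_pow (fun _ ↦ ih) hz).summable

theorem diffContOnCl_tsum_mul_pow (hv : Summable fun N ↦ ‖v N‖) :
    DiffContOnCl ℂ (fun z ↦ ∑' N, v N * z ^ N) (ball 0 1) := by
  refine ⟨differentiableOn_tsum_mul_pow fun z hz ↦
    summable_norm_mul_pow hv (mem_ball_zero_iff.1 hz).le, ?_⟩
  rw [closure_ball 0 one_ne_zero]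
  refine continuousOn_tsum (fun N ↦ by fun_prop) hv fun N z hz ↦ ?_
  rw [norm_mul, norm_pow]
  exact mul_le_of_le_one_right (norm_nonneg _)
    (pow_le_one₀ (norm_nonneg _) (mem_closedBall_zero_iff.1 hz))

theorem norm_tsum_mul_pow_le (hv : Summable fun N ↦ ‖v N‖) {M : ℝ}
    (hM : ∀ w ∈ sphere (0 : ℂ) 1, ‖∑' N, v N * w ^ N‖ ≤ M) (hz : z ∈ ball (0 : ℂ) 1) :
    ‖∑' N, v N * z ^ N‖ ≤ M :=
  Complex.norm_le_of_forall_mem_frontier_norm_le isBounded_ball (diffContOnCl_tsum_mul_pow hv)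
    (by rwa [frontier_ball 0 one_ne_zero]) (subset_closure hz)

end PowerSeries

section EulerOperator

open Complex Filter Topology

theorem norm_iteratedDeriv_sub_le {E : Type*} [NormedAddCommGroup E] [NormedSpace ℝ E] {g : ℝ → E}
    {j : ℕ} {M : ℝ} (hg : ContDiff ℝ (j + 1 : ℕ) g) (hM : ∀ θ, ‖iteratedDeriv (j + 1) g θ‖ ≤ M)
    (x y : ℝ) : ‖iteratedDeriv j g x - iteratedDeriv j g y‖ ≤ M * |x - y| :=
  convex_univ.norm_image_sub_le_of_norm_deriv_le
    (fun _ _ ↦ (hg.differentiable_iteratedDeriv j (by norm_cast; lia)).differentiableAt)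
    (fun θ _ ↦ by rw [← iteratedDeriv_succ]; exact hM θ) (mem_univ y) (mem_univ x)

/-- The maximum principle is applied to the difference, not to its limit `h → 0`, since the
latter is not known to extend continuously to the circle. -/
theorem norm_tsum_exp_sub_one_pow_le {h : ℝ} (j : ℕ) {b : ℕ → ℂ} {g : ℝ → ℂ} {M : ℝ}
    (hb : Summable fun N ↦ ‖b N‖) (hbg : ∀ θ : ℝ, HasSum (fun N ↦ b N * exp (θ * I) ^ N) (g θ))
    (hg : ContDiff ℝ j g) (hM : ∀ θ, ‖iteratedDeriv j g θ‖ ≤ M) {z : ℂ} (hz : z ∈ ball (0 : ℂ) 1) :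
    ‖∑' N, b N * (exp (h * I) ^ N - 1) ^ j * z ^ N‖ ≤ |h| ^ j * M := by
  induction j generalizing b g M with
  | zero =>
    simp only [pow_zero, mul_one, one_mul, iteratedDeriv_zero] at hM ⊢
    refine norm_tsum_mul_pow_le hb (fun w hw ↦ ?_) hz
    obtain ⟨θ, rfl⟩ := (norm_eq_one_iff w).1 (mem_sphere_zero_iff_norm.1 hw)
    exact (hbg θ).tsum_eq ▸ hM θ
  | succ j ih =>
    have hshift : ContDiff ℝ (j + 1 : ℕ) fun θ ↦ g (θ + h) := hg.comp (by fun_prop)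
    have hlip (θ : ℝ) : ‖iteratedDeriv j (fun θ ↦ g (θ + h) - g θ) θ‖ ≤ |h| * M := by
      have hj {f : ℝ → ℂ} (hf : ContDiff ℝ (j + 1 : ℕ) f) : ContDiffAt ℝ j f θ :=
        (hf.of_le (by norm_cast; lia)).contDiffAt
      rw [iteratedDeriv_fun_sub (hj hshift) (hj hg), iteratedDeriv_comp_add_const]
      exact (norm_iteratedDeriv_sub_le hg hM _ _).trans_eq (by rw [add_sub_cancel_left, mul_comm])
    refine (le_of_eq ?_).trans ((ih (b := fun N ↦ b N * (exp (h * I) ^ N - 1)) ?_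
      (fun θ ↦ ?_) ?_ hlip).trans_eq (by ring))
    · simp only [pow_succ', mul_assoc]
    · refine .of_nonneg_of_le (fun N ↦ norm_nonneg _) (fun N ↦ ?_) (hb.mul_right 2)
      rw [norm_mul]
      gcongr
      refine (norm_sub_le _ _).trans ?_
      rw [norm_pow, norm_exp_ofReal_mul_I]
      norm_num
    · refine ((hbg (θ + h)).sub (hbg θ)).congr_fun fun N ↦ ?_
      push_cast
      rw [add_mul, Complex.exp_add, mul_pow]
      ring
    · exact (hshift.sub hg).of_le (by norm_cast; lia)

theorem tendsto_exp_pow_sub_one_div (N : ℕ) :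
    Tendsto (fun h : ℝ ↦ (exp (h * I) ^ N - 1) / h) (𝓝[≠] 0) (𝓝 (N * I)) := by
  have h : HasDerivAt (fun h : ℝ ↦ exp (h * I) ^ N) (N * I) 0 := by
    refine ((((hasDerivAt_id (0 : ℝ)).ofReal_comp.mul_const I).cexp).pow N).congr_deriv ?_
    simp
  refine h.tendsto_slope.congr fun x ↦ ?_
  simp [slope, div_eq_inv_mul]

theorem norm_exp_pow_sub_one_le (h : ℝ) (N : ℕ) : ‖exp (h * I) ^ N - 1‖ ≤ N * |h| := by
  have := norm_exp_I_mul_ofReal_sub_one_le (x := N * h)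
  rw [Real.norm_eq_abs, abs_mul, Nat.abs_cast] at this
  rw [← Complex.exp_nat_mul]
  convert this using 4
  push_cast
  ring

theorem norm_tsum_natCast_pow_mul_le {j : ℕ} {b : ℕ → ℂ} {g : ℝ → ℂ} {M : ℝ}
    (hb : Summable fun N ↦ ‖b N‖) (hbg : ∀ θ : ℝ, HasSum (fun N ↦ b N * exp (θ * I) ^ N) (g θ))
    (hg : ContDiff ℝ j g) (hM : ∀ θ, ‖iteratedDeriv j g θ‖ ≤ M) {z : ℂ} (hz : z ∈ ball (0 : ℂ) 1) :
    ‖∑' N : ℕ, (N : ℂ) ^ j * b N * z ^ N‖ ≤ M := by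
  have hsum := (summable_natCast_pow_mul_mul_pow (fun z hz ↦
    summable_norm_mul_pow hb (mem_ball_zero_iff.1 hz).le) j hz).norm
  have hlim : Tendsto (fun h : ℝ ↦ ∑' N, b N * ((exp (h * I) ^ N - 1) / h) ^ j * z ^ N) (𝓝[≠] 0)
      (𝓝 (∑' N : ℕ, b N * (N * I) ^ j * z ^ N)) := by
    refine tendsto_tsum_of_dominated_convergence hsum
      (fun N ↦ (((tendsto_exp_pow_sub_one_div N).pow j).const_mul _).mul_const _) ?_
    filter_upwards [self_mem_nhdsWithin] with h hh N
    have hh : 0 < |h| := abs_pos.2 hh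
    rw [norm_mul, norm_mul, norm_mul, norm_mul, norm_pow, norm_pow, norm_div, mul_comm ‖b N‖,
      norm_pow, Complex.norm_natCast, norm_real, Real.norm_eq_abs]
    gcongr
    exact div_le_of_le_mul₀ hh.le N.cast_nonneg (norm_exp_pow_sub_one_le h N)
  have hI : ∑' N : ℕ, b N * (N * I) ^ j * z ^ N = I ^ j * ∑' N : ℕ, (N : ℂ) ^ j * b N * z ^ N := by
    rw [← tsum_mul_left]
    exact tsum_congr fun N ↦ by ring
  have hnorm : ‖∑' N : ℕ, (N : ℂ) ^ j * b N * z ^ N‖ = ‖∑' N : ℕ, b N * (N * I) ^ j * z ^ N‖ := by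
    rw [hI, norm_mul, norm_pow, norm_I, one_pow, one_mul]
  rw [hnorm]
  refine le_of_tendsto hlim.norm ?_
  filter_upwards [self_mem_nhdsWithin] with h hh
  have hh : 0 < |h| := abs_pos.2 hh
  have hdiv : ∑' N, b N * ((exp (h * I) ^ N - 1) / h) ^ j * z ^ N =
      (∑' N, b N * (exp (h * I) ^ N - 1) ^ j * z ^ N) / h ^ j := by
    rw [← tsum_div_const]
    exact tsum_congr fun N ↦ by rw [div_pow]; ring
  rw [hdiv, norm_div, norm_pow, norm_real, Real.norm_eq_abs]
  exact div_le_of_le_mul₀ (by positivity) ((norm_nonneg _).trans (hM 0))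
    ((norm_tsum_exp_sub_one_pow_le j hb hbg hg hM hz).trans_eq (mul_comm _ _))

end EulerOperator

section Multiplier

open AddCircle

theorem integral_mul_rpow_le {X : Type*} [MeasurableSpace X] {μ : Measure X} {f d : X → ℝ}
    {c σ α : ℝ} (hf : Integrable f μ) (hfd : Integrable (fun x ↦ f x * d x) μ) (hf0 : 0 ≤ f)
    (hd0 : 0 ≤ d) (hσ : 0 < σ) (hα0 : 0 ≤ α) (hα1 : α ≤ 1) (hc : ∫ x, f x ∂μ ≤ c)
    (hcσ : ∫ x, f x * d x ∂μ ≤ c * σ) : ∫ x, f x * d x ^ α ∂μ ≤ c * σ ^ α := by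
  have htangent (x : X) : d x ^ α ≤ σ ^ α * (1 - α + α / σ * d x) := by
    have h := rpow_one_add_le_one_add_mul_self (s := d x / σ - 1)
      (by linarith [div_nonneg (hd0 x) hσ.le]) hα0 hα1
    rw [add_sub_cancel, div_rpow (hd0 x) hσ.le, div_le_iff₀ (by positivity)] at h
    exact h.trans_eq (by ring)
  calc ∫ x, f x * d x ^ α ∂μ
      ≤ ∫ x, σ ^ α * ((1 - α) * f x + α / σ * (f x * d x)) ∂μ := by
        refine integral_mono_of_nonneg
          (.of_forall fun x ↦ mul_nonneg (hf0 x) (rpow_nonneg (hd0 x) _))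
          (((hf.const_mul _).add (hfd.const_mul _)).const_mul _) (.of_forall fun x ↦ ?_)
        exact (mul_le_mul_of_nonneg_left (htangent x) (hf0 x)).trans_eq (by ring)
    _ = σ ^ α * ((1 - α) * ∫ x, f x ∂μ + α / σ * ∫ x, f x * d x ∂μ) := by
        rw [integral_const_mul, integral_add (hf.const_mul _) (hfd.const_mul _), integral_const_mul,
          integral_const_mul]
    _ ≤ σ ^ α * ((1 - α) * c + α / σ * (c * σ)) := by
        have : 0 ≤ 1 - α := by linarith
        gcongr
    _ = c * σ ^ α := by
        field_simp
        ring

variable {T : ℝ}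

theorem fourier_neg_natCast (N : ℕ) (t : AddCircle T) : fourier (-N) t = fourier (-1) t ^ N := by
  induction N with
  | zero => simp
  | succ N ih => rw [Nat.cast_succ, neg_add, fourier_add, ih, pow_succ]

variable {u : ℕ → ℂ} {z : ℂ}

theorem continuous_tsum_mul_fourier (hu : ∀ z ∈ ball (0 : ℂ) 1, Summable fun N ↦ u N * z ^ N)
    (hz : z ∈ ball (0 : ℂ) 1) (n : ℤ) :
    Continuous fun t : AddCircle T ↦ ∑' N, u N * (z * fourier n t) ^ N :=
  (differentiableOn_tsum_mul_pow hu).continuousOn.comp_continuous (by fun_prop)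
    fun t ↦ mul_mem_ball_zero_one (norm_fourier_apply n t) hz

variable [Fact (0 < T)] {κ : AddCircle T → ℂ}

theorem hasSum_fourierCoeff_mul (hκ : Integrable κ haarAddCircle)
    (hu : Summable fun N ↦ u N * z ^ N) :
    HasSum (fun N : ℕ ↦ fourierCoeff κ N * u N * z ^ N)
      (∫ t, κ t * ∑' N, u N * (z * fourier (-1) t) ^ N ∂haarAddCircle) := by
  have hterm (N : ℕ) (t : AddCircle T) : κ t * (u N * (z * fourier (-1) t) ^ N) =
      fourier (-N) t • κ t * (u N * z ^ N) := by
    rw [fourier_neg_natCast, mul_pow, smul_eq_mul]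
    ring
  simp only [← tsum_mul_left, hterm]
  refine (hasSum_integral_of_summable_integral_norm
    (fun N ↦ (hκ.fourier_smul _).mul_const _) ?_).congr_fun fun N ↦ ?_
  · simpa only [norm_mul, norm_smul, norm_fourier_apply, one_mul, integral_mul_const] using
      hu.norm.mul_left (∫ t, ‖κ t‖ ∂haarAddCircle)
  · rw [integral_mul_const, mul_assoc]
    rfl

theorem norm_tsum_one_sub_fourierCoeff_mul_le {M c : ℝ} (hκ : Integrable κ haarAddCircle)
    (hc : ∫ t, ‖κ t‖ ∂haarAddCircle ≤ c) (hu : ∀ z ∈ ball (0 : ℂ) 1, Summable fun N ↦ u N * z ^ N)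
    (hM : ∀ z ∈ ball (0 : ℂ) 1, ‖∑' N, u N * z ^ N‖ ≤ M) (hz : z ∈ ball (0 : ℂ) 1) :
    ‖∑' N : ℕ, (1 - fourierCoeff κ N) * u N * z ^ N‖ ≤ (1 + c) * M := by
  have h := (hu z hz).hasSum.sub (hasSum_fourierCoeff_mul hκ (hu z hz))
  simp only [sub_mul, one_mul, h.tsum_eq, add_mul]
  refine (norm_sub_le _ _).trans (add_le_add (hM z hz) ?_)
  refine (norm_integral_le_of_norm_le (hκ.norm.mul_const M) (.of_forall fun t ↦ ?_)).trans ?_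
  · rw [norm_mul]
    gcongr
    exact hM _ (mul_mem_ball_zero_one (norm_fourier_apply _ t) hz)
  · rw [integral_mul_const]
    gcongr
    exact (norm_nonneg _).trans (hM z hz)

theorem norm_tsum_one_sub_fourierCoeff_mul_le_of_holder {P c σ α : ℝ}
    (hκ : Integrable κ haarAddCircle) (h0 : fourierCoeff κ 0 = 1) (hσ : 0 < σ) (hα0 : 0 ≤ α)
    (hα1 : α ≤ 1) (hc : ∫ t, ‖κ t‖ ∂haarAddCircle ≤ c)
    (hcσ : ∫ t, ‖κ t‖ * ‖1 - fourier (-1) t‖ ∂haarAddCircle ≤ c * σ)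
    (hu : ∀ z ∈ ball (0 : ℂ) 1, Summable fun N ↦ u N * z ^ N) (hP : 0 ≤ P)
    (hM : ∀ z ∈ ball (0 : ℂ) 1, ∀ ω : ℂ, ‖ω‖ = 1 →
      ‖∑' N, u N * z ^ N - ∑' N, u N * (z * ω) ^ N‖ ≤ P * ‖1 - ω‖ ^ α)
    (hz : z ∈ ball (0 : ℂ) 1) :
    ‖∑' N : ℕ, (1 - fourierCoeff κ N) * u N * z ^ N‖ ≤ P * (c * σ ^ α) := by
  have hint {g : AddCircle T → ℂ} (hg : Continuous g) :
      Integrable (fun t ↦ κ t * g t) haarAddCircle :=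
    memLp_one_iff_integrable.1 (memLp_mul_of_continuous (memLp_one_iff_integrable.2 hκ) hg)
  have hmean : ∫ t, κ t ∂haarAddCircle = 1 := by simpa [fourierCoeff] using h0
  have hsub : ∑' N : ℕ, (1 - fourierCoeff κ N) * u N * z ^ N =
      ∫ t, κ t * (∑' N, u N * z ^ N - ∑' N, u N * (z * fourier (-1) t) ^ N) ∂haarAddCircle := by
    have h := (hu z hz).hasSum.sub (hasSum_fourierCoeff_mul hκ (hu z hz))
    simp only [sub_mul, one_mul, h.tsum_eq, mul_sub]
    rw [integral_sub (hint continuous_const) (hint (continuous_tsum_mul_fourier hu hz _)),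
      integral_mul_const, hmean, one_mul]
  have hκd {β : ℝ} (hβ : 0 ≤ β) :
      Integrable (fun t ↦ ‖κ t‖ * ‖1 - fourier (-1) t‖ ^ β) haarAddCircle := by
    have hcont : Continuous fun t : AddCircle T ↦ ‖1 - fourier (-1) t‖ ^ β :=
      Continuous.rpow_const (by fun_prop) fun _ ↦ .inr hβ
    refine (hint (Complex.continuous_ofReal.comp hcont)).norm.congr (.of_forall fun t ↦ ?_)
    simp [abs_rpow_of_nonneg]
  calc ‖∑' N : ℕ, (1 - fourierCoeff κ N) * u N * z ^ N‖
      ≤ ∫ t, P * (‖κ t‖ * ‖1 - fourier (-1) t‖ ^ α) ∂haarAddCircle := by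
        rw [hsub]
        refine norm_integral_le_of_norm_le ?_ (.of_forall fun t ↦ ?_)
        · exact (hκd hα0).const_mul P
        rw [norm_mul, mul_left_comm]
        gcongr
        exact hM z hz _ (norm_fourier_apply _ _)
    _ ≤ P * (c * σ ^ α) := by
        rw [integral_const_mul]
        gcongr
        exact integral_mul_rpow_le hκ.norm (by simpa using hκd zero_le_one)
          (fun _ ↦ norm_nonneg _) (fun _ ↦ norm_nonneg _) hσ hα0 hα1 hc hcσ

end Multiplier

section PeriodicHolder

variable {E : Type*} [NormedAddCommGroup E]

theorem add_rpow_le_two_mul_rpow {a b α : ℝ} (ha : 0 ≤ a) (hb : 0 ≤ b) (hα0 : 0 ≤ α) (hα1 : α ≤ 1) :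
    a ^ α + b ^ α ≤ 2 * ((a + b) / 2) ^ α := by
  have h := (concaveOn_rpow hα0 hα1).2 ha hb one_half_pos.le one_half_pos.le (add_halves 1)
  simp only [smul_eq_mul] at h
  rw [← mul_add, ← mul_add, one_div_mul_eq_div, one_div_mul_eq_div] at h
  linarith

theorem norm_sub_le_of_periodic_of_holder {f : ℝ → E} {T H α : ℝ} (hf : Function.Periodic f T)
    (hT : 0 < T) (hα0 : 0 < α) (hα1 : α ≤ 1) (hH : 0 ≤ H)
    (hfH : ∀ x ∈ Icc 0 T, ∀ y ∈ Icc 0 T, ‖f x - f y‖ ≤ H * |x - y| ^ α) {t : ℝ}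
    (ht : t ∈ Icc 0 T) (θ : ℝ) : ‖f (θ + t) - f θ‖ ≤ H * (2 * (t / 2) ^ α) := by
  wlog hθ : θ ∈ Ico 0 T generalizing θ
  · have h := this _ (toIcoMod_mem_Ico' hT θ)
    rwa [toIcoMod, sub_add_eq_add_sub, hf.sub_zsmul_eq, hf.sub_zsmul_eq] at h
  rcases le_or_gt (θ + t) T with h | h
  · refine (hfH _ ⟨add_nonneg hθ.1 ht.1, h⟩ _ (Ico_subset_Icc_self hθ)).trans ?_
    rw [add_sub_cancel_left, abs_of_nonneg ht.1]
    gcongr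
    simpa [zero_rpow hα0.ne'] using add_rpow_le_two_mul_rpow ht.1 le_rfl hα0.le hα1
  · have hright := hfH T ⟨hT.le, le_rfl⟩ θ (Ico_subset_Icc_self hθ)
    have hleft := hfH (θ + t - T) ⟨by linarith, by linarith [hθ.2, ht.2]⟩ 0 ⟨le_rfl, hT.le⟩
    rw [hf.sub_eq, sub_zero, abs_of_pos (by linarith)] at hleft
    rw [hf.eq, abs_of_pos (by linarith [hθ.2])] at hright
    have hsum := add_rpow_le_two_mul_rpow (a := θ + t - T) (b := T - θ) (by linarith)
      (by linarith [hθ.2]) hα0.le hα1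
    rw [show θ + t - T + (T - θ) = t by ring] at hsum
    calc ‖f (θ + t) - f θ‖ ≤ ‖f (θ + t) - f 0‖ + ‖f 0 - f θ‖ :=
          norm_sub_le_norm_sub_add_norm_sub ..
      _ ≤ H * ((θ + t - T) ^ α + (T - θ) ^ α) := by linarith
      _ ≤ H * (2 * (t / 2) ^ α) := by gcongr

open Complex in
theorem norm_sub_le_mul_norm_exp_sub_one_rpow {f : ℝ → E} {H α : ℝ}
    (hf : Function.Periodic f (2 * π)) (hα0 : 0 < α) (hα1 : α ≤ 1) (hH : 0 ≤ H)
    (hfH : ∀ x ∈ Icc 0 (2 * π), ∀ y ∈ Icc 0 (2 * π), ‖f x - f y‖ ≤ H * |x - y| ^ α) (θ τ : ℝ) :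
    ‖f (θ + τ) - f θ‖ ≤ 2 * (π / 4) ^ α * H * ‖exp (τ * I) - 1‖ ^ α := by
  set s := toIocMod two_pi_pos (-π) τ with hs
  have hsI : s ∈ Ioc (-π) (-π + 2 * π) := toIocMod_mem_Ioc ..
  have hfs : f (θ + τ) = f (θ + s) := by
    rw [hs, toIocMod, ← add_sub_assoc, hf.sub_zsmul_eq]
  have hchord : |s| / 2 ≤ π / 4 * ‖exp (τ * I) - 1‖ := by
    have h := angle_le_mul_norm_sub (norm_exp_ofReal_mul_I τ) norm_one
    rw [angle_exp_one] at h
    linarith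
  have habs : ‖f (θ + s) - f θ‖ ≤ H * (2 * (|s| / 2) ^ α) := by
    have hper {t : ℝ} (ht0 : 0 ≤ t) (htπ : t ≤ π) (θ : ℝ) :=
      norm_sub_le_of_periodic_of_holder hf two_pi_pos hα0 hα1 hH hfH ⟨ht0, by linarith⟩ θ
    rcases le_total 0 s with h0 | h0
    · rw [abs_of_nonneg h0]
      exact hper h0 (by linarith [hsI.2]) θ
    · rw [abs_of_nonpos h0, norm_sub_rev]
      simpa using hper (neg_nonneg.2 h0) (by linarith [hsI.1]) (θ + s)
  rw [hfs]
  calc ‖f (θ + s) - f θ‖ ≤ H * (2 * (|s| / 2) ^ α) := habs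
    _ ≤ H * (2 * (π / 4 * ‖exp (τ * I) - 1‖) ^ α) := by gcongr
    _ = _ := by
      rw [mul_rpow (by positivity) (norm_nonneg _)]
      ring

theorem iteratedDeriv_periodic [NormedSpace ℝ E] {g : ℝ → E} {T : ℝ} (hg : Function.Periodic g T)
    (j : ℕ) : Function.Periodic (iteratedDeriv j g) T := fun θ ↦ by
  conv_rhs => rw [← funext hg, iteratedDeriv_comp_add_const]

end PeriodicHolder

section HolderCircle

variable {k : ℕ} {α : ℝ} {φ : ℂ → ℂ}

theorem circParam_periodic (φ : ℂ → ℂ) : Function.Periodic (circParam φ) (2 * π) := fun θ ↦ by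
  simp only [circParam, Complex.ofReal_add, Complex.ofReal_mul, Complex.ofReal_ofNat,
    add_mul, Complex.exp_periodic _]

/-- The sup norm of the `j`-th derivative of `φ` along the circle. -/
noncomputable def circleDerivSup (j : ℕ) (φ : ℂ → ℂ) : ℝ :=
  sSup ((fun θ ↦ ‖iteratedDeriv j (circParam φ) θ‖) '' Icc 0 (2 * π))

/-- The `α`-Hölder seminorm of the `k`-th derivative of `φ` along the circle. -/
noncomputable def circleHolderSeminorm (k : ℕ) (α : ℝ) (φ : ℂ → ℂ) : ℝ :=
  sSup {c : ℝ | ∃ θ₁ ∈ Icc 0 (2 * π), ∃ θ₂ ∈ Icc 0 (2 * π), θ₁ ≠ θ₂ ∧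
    c = ‖iteratedDeriv k (circParam φ) θ₁ - iteratedDeriv k (circParam φ) θ₂‖ / |θ₁ - θ₂| ^ α}

theorem circleHolderNorm_eq (k : ℕ) (α : ℝ) (φ : ℂ → ℂ) : circleHolderNorm k α φ =
    ∑ j ∈ Finset.range (k + 1), circleDerivSup j φ + circleHolderSeminorm k α φ := rfl

theorem circleDerivSup_nonneg (j : ℕ) (φ : ℂ → ℂ) : 0 ≤ circleDerivSup j φ :=
  sSup_nonneg (by rintro _ ⟨θ, _, rfl⟩; positivity)

theorem circleHolderSeminorm_nonneg (k : ℕ) (α : ℝ) (φ : ℂ → ℂ) :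
    0 ≤ circleHolderSeminorm k α φ :=
  sSup_nonneg (by rintro _ ⟨θ₁, _, θ₂, _, _, rfl⟩; positivity)

theorem norm_iteratedDeriv_circParam_le (hφ : ContDiff ℝ k (circParam φ)) (θ : ℝ) :
    ‖iteratedDeriv k (circParam φ) θ‖ ≤ circleDerivSup k φ := by
  have hper := iteratedDeriv_periodic (circParam_periodic φ) k
  obtain ⟨s, hs, hθs⟩ := hper.exists_mem_Ico₀ two_pi_pos θ
  have hcont : Continuous (iteratedDeriv k (circParam φ)) := hφ.continuous_iteratedDeriv k le_rfl
  rw [hθs]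
  exact le_csSup (isCompact_Icc.image hcont.norm).bddAbove ⟨s, Ico_subset_Icc_self hs, rfl⟩

theorem norm_iteratedDeriv_circParam_sub_le (hα : 0 < α) (hφ : MemHolderCircle k α φ) {x y : ℝ}
    (hx : x ∈ Icc 0 (2 * π)) (hy : y ∈ Icc 0 (2 * π)) :
    ‖iteratedDeriv k (circParam φ) x - iteratedDeriv k (circParam φ) y‖ ≤
      circleHolderSeminorm k α φ * |x - y| ^ α := by
  obtain ⟨-, C, hC⟩ := hφ
  rcases eq_or_ne x y with rfl | hxy
  · simp [zero_rpow hα.ne']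
  have hpos {x y : ℝ} (hxy : x ≠ y) : 0 < |x - y| ^ α :=
    rpow_pos_of_pos (abs_pos.2 (sub_ne_zero.2 hxy)) _
  rw [← div_le_iff₀ (hpos hxy)]
  refine le_csSup ⟨C, ?_⟩ ⟨x, hx, y, hy, hxy, rfl⟩
  rintro _ ⟨θ₁, _, θ₂, _, hne, rfl⟩
  exact (div_le_iff₀ (hpos hne)).2 (hC θ₁ θ₂)

theorem norm_iteratedDeriv_circParam_add_sub_le (hα0 : 0 < α) (hα1 : α ≤ 1)
    (hφ : MemHolderCircle k α φ) (θ τ : ℝ) :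
    ‖iteratedDeriv k (circParam φ) (θ + τ) - iteratedDeriv k (circParam φ) θ‖ ≤
      2 * (π / 4) ^ α * circleHolderSeminorm k α φ * ‖Complex.exp (τ * Complex.I) - 1‖ ^ α :=
  norm_sub_le_mul_norm_exp_sub_one_rpow (iteratedDeriv_periodic (circParam_periodic φ) k) hα0 hα1
    (circleHolderSeminorm_nonneg k α φ)
    (fun _ hx _ hy ↦ norm_iteratedDeriv_circParam_sub_le hα0 hφ hx hy) θ τ

end HolderCircle

section MaximumPrinciple

open Complex Filter Topology ComplexConjugate

variable {Φ : ℂ → ℂ} {z w : ℂ}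

theorem norm_le_of_norm_pow_mul_le {E : ℝ} (hΦ : DifferentiableOn ℂ Φ (ball 0 1)) (n : ℕ)
    (hE : ∀ z ∈ ball (0 : ℂ) 1, ‖z ^ n * Φ z‖ ≤ E) (hz : z ∈ ball (0 : ℂ) 1) : ‖Φ z‖ ≤ E := by
  have hr {r : ℝ} (hr : r ∈ Ioo ‖z‖ 1) : r ^ n * ‖Φ z‖ ≤ E := by
    have hr0 : 0 < r := (norm_nonneg z).trans_lt hr.1
    rw [← le_div_iff₀' (by positivity)]
    refine norm_le_of_forall_mem_frontier_norm_le (isBounded_ball (x := 0) (r := r))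
      ⟨hΦ.mono (ball_subset_ball hr.2.le), hΦ.continuousOn.mono ?_⟩ (fun ζ hζ ↦ ?_)
      (subset_closure (mem_ball_zero_iff.2 hr.1))
    · rw [closure_ball 0 hr0.ne']
      exact closedBall_subset_ball hr.2
    · rw [frontier_ball 0 hr0.ne', mem_sphere_zero_iff_norm] at hζ
      rw [le_div_iff₀' (by positivity), ← hζ, ← norm_pow, ← norm_mul]
      exact hE ζ (by rw [mem_ball_zero_iff, hζ]; exact hr.2)
  have hlim : Tendsto (fun r : ℝ ↦ r ^ n * ‖Φ z‖) (𝓝[<] 1) (𝓝 (1 ^ n * ‖Φ z‖)) :=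
    tendsto_nhdsWithin_of_tendsto_nhds (Continuous.tendsto (by fun_prop) 1)
  rw [one_pow, one_mul] at hlim
  refine le_of_tendsto hlim ?_
  filter_upwards [Ioo_mem_nhdsLT (mem_ball_zero_iff.1 hz)] with r using hr

theorem norm_one_sub_conj_mul_sq (z w : ℂ) :
    ‖1 - conj w * z‖ ^ 2 = ‖z - w‖ ^ 2 + (1 - ‖z‖ ^ 2) * (1 - ‖w‖ ^ 2) := by
  simp only [← normSq_eq_norm_sq, normSq_apply, sub_re, sub_im, mul_re, mul_im, conj_re, conj_im,
    one_re, one_im]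
  ring

theorem norm_sub_le_norm_one_sub_conj_mul (hz : ‖z‖ ≤ 1) (hw : ‖w‖ ≤ 1) :
    ‖z - w‖ ≤ ‖1 - conj w * z‖ := by
  refine le_of_sq_le_sq ?_ (norm_nonneg _)
  have hz : 0 ≤ 1 - ‖z‖ ^ 2 := sub_nonneg.2 (pow_le_one₀ (norm_nonneg _) hz)
  have hw : 0 ≤ 1 - ‖w‖ ^ 2 := sub_nonneg.2 (pow_le_one₀ (norm_nonneg _) hw)
  linarith [norm_one_sub_conj_mul_sq z w, mul_nonneg hz hw]

theorem norm_one_sub_conj_mul_eq (hz : ‖z‖ = 1) : ‖1 - conj w * z‖ = ‖z - w‖ := by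
  rw [← sq_eq_sq₀ (norm_nonneg _) (norm_nonneg _), norm_one_sub_conj_mul_sq, hz]
  ring

theorem diffContOnCl_one_sub_conj_mul_cpow (hw : ‖w‖ ≤ 1) {β : ℂ} (hβ : 0 < β.re) :
    DiffContOnCl ℂ (fun z ↦ (1 - conj w * z) ^ β) (ball 0 1) := by
  have hle (z : ℂ) : ‖conj w * z‖ ≤ ‖z‖ := by
    rw [norm_mul, RCLike.norm_conj]
    exact mul_le_of_le_one_left (norm_nonneg z) hw
  constructor
  · refine DifferentiableOn.cpow (by fun_prop) (by fun_prop) fun z hz ↦ ?_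
    rw [sub_eq_add_neg]
    refine mem_slitPlane_of_norm_lt_one ?_
    rw [norm_neg]
    exact (hle z).trans_lt (mem_ball_zero_iff.1 hz)
  · rw [closure_ball 0 one_ne_zero]
    intro z hz
    have hre : 0 ≤ (1 - conj w * z).re := by
      rw [sub_re, one_re, sub_nonneg]
      exact (re_le_norm _).trans ((hle z).trans (mem_closedBall_zero_iff.1 hz))
    have hbase : ContinuousAt (fun z ↦ 1 - conj w * z) z := by fun_prop
    exact (ContinuousAt.comp (f := fun z ↦ 1 - conj w * z)
      (continuousAt_cpow_const_of_re_pos (.inl hre) hβ) hbase).continuousWithinAt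

/-- The maximum principle for `(f z - f w) / (z - w) * (1 - conj w * z) ^ (1 - α)`. The second
factor replaces `(z - w) ^ (1 - α)`, which has no holomorphic branch. -/
theorem norm_sub_le_mul_rpow_of_sphere {f : ℂ → ℂ} {R S α : ℝ} (hR : 1 < R)
    (hf : DifferentiableOn ℂ f (ball 0 R)) (hα1 : α < 1) (hS : 0 ≤ S) (hw : ‖w‖ ≤ 1)
    (hfS : ∀ ζ ∈ sphere (0 : ℂ) 1, ‖f ζ - f w‖ ≤ S * ‖ζ - w‖ ^ α) (hz : z ∈ ball (0 : ℂ) 1) :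
    ‖f z - f w‖ ≤ S * ‖z - w‖ ^ α := by
  rcases eq_or_ne z w with rfl | hzw
  · rw [sub_self, norm_zero]
    positivity
  have hslope {ζ : ℂ} (hζ : ζ ≠ w) : ‖dslope f w ζ‖ = ‖f ζ - f w‖ / ‖ζ - w‖ := by
    rw [dslope_of_ne f hζ, slope_def_field, norm_div]
  let g (ζ : ℂ) : ℂ := dslope f w ζ * (1 - conj w * ζ) ^ ((1 - α : ℝ) : ℂ)
  have hg (ζ : ℂ) : ‖g ζ‖ = ‖dslope f w ζ‖ * ‖1 - conj w * ζ‖ ^ (1 - α) := by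
    rw [norm_mul, norm_cpow_real]
  have hdiff : DifferentiableOn ℂ (dslope f w) (ball 0 R) :=
    (differentiableOn_dslope (isOpen_ball.mem_nhds (mem_ball_zero_iff.2 (hw.trans_lt hR)))).2 hf
  have hgS : ‖g z‖ ≤ S := by
    refine norm_le_of_forall_mem_frontier_norm_le isBounded_ball
      (DiffContOnCl.smul ⟨hdiff.mono (ball_subset_ball hR.le), hdiff.continuousOn.mono ?_⟩
        (diffContOnCl_one_sub_conj_mul_cpow hw (by simpa using hα1))) (fun ζ hζ ↦ ?_)
      (subset_closure hz)
    · rw [closure_ball 0 one_ne_zero]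
      exact closedBall_subset_ball hR
    · rw [frontier_ball 0 one_ne_zero] at hζ
      change ‖g ζ‖ ≤ S
      rw [hg, norm_one_sub_conj_mul_eq (mem_sphere_zero_iff_norm.1 hζ)]
      rcases eq_or_ne ζ w with rfl | hne
      · simpa [zero_rpow (sub_pos.2 hα1).ne'] using hS
      have hpos : 0 < ‖ζ - w‖ := norm_pos_iff.2 (sub_ne_zero.2 hne)
      rw [hslope hne, rpow_sub hpos, rpow_one, div_mul_div_cancel₀ hpos.ne',
        div_le_iff₀ (by positivity)]
      exact hfS ζ hζ
  have hpos : 0 < ‖z - w‖ := norm_pos_iff.2 (sub_ne_zero.2 hzw)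
  have hle : ‖z - w‖ ^ (1 - α) ≤ ‖1 - conj w * z‖ ^ (1 - α) :=
    rpow_le_rpow hpos.le (norm_sub_le_norm_one_sub_conj_mul (mem_ball_zero_iff.1 hz).le hw)
      (sub_pos.2 hα1).le
  rw [hg, hslope hzw] at hgS
  have h := (mul_le_mul_of_nonneg_left hle (by positivity)).trans hgS
  rwa [rpow_sub hpos, rpow_one, div_mul_div_cancel₀ hpos.ne', div_le_iff₀ (by positivity)] at h

theorem norm_sub_le_mul_rpow_of_rotation_of_lt_one {S α : ℝ} (hΦ : DifferentiableOn ℂ Φ (ball 0 1))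
    (hα1 : α < 1) (hS : 0 ≤ S)
    (hΦS : ∀ z ∈ ball (0 : ℂ) 1, ∀ ω : ℂ, ‖ω‖ = 1 → ‖Φ (z * ω) - Φ z‖ ≤ S * ‖ω - 1‖ ^ α)
    (hz : z ∈ ball (0 : ℂ) 1) (hw : w ∈ ball (0 : ℂ) 1) : ‖Φ z - Φ w‖ ≤ S * ‖z - w‖ ^ α := by
  have hdil {r : ℝ} (hr : r ∈ Ioo (0 : ℝ) 1) : ‖Φ (r * z) - Φ (r * w)‖ ≤ S * ‖z - w‖ ^ α := by
    have hrn : ‖(r : ℂ)‖ = r := by rw [norm_real, Real.norm_of_nonneg hr.1.le]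
    have hf : DifferentiableOn ℂ (fun z ↦ Φ (r * z)) (ball 0 r⁻¹) := by
      refine hΦ.comp (by fun_prop) fun ζ hζ ↦ ?_
      rw [mem_ball_zero_iff] at hζ ⊢
      rw [norm_mul, hrn, ← mul_inv_cancel₀ hr.1.ne']
      gcongr
      exact hr.1
    have hR : 1 < r⁻¹ := (one_lt_inv₀ hr.1).2 hr.2
    have hsphere {w : ℂ} (hw : w ∈ sphere (0 : ℂ) 1) {z : ℂ} (hz : z ∈ ball (0 : ℂ) 1) :
        ‖Φ (r * z) - Φ (r * w)‖ ≤ S * ‖z - w‖ ^ α := by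
      rw [mem_sphere_zero_iff_norm] at hw
      refine norm_sub_le_mul_rpow_of_sphere hR hf hα1 hS hw.le (fun ζ hζ ↦ ?_) hz
      have hw0 : w ≠ 0 := norm_ne_zero_iff.1 (by rw [hw]; exact one_ne_zero)
      have h := hΦS (r * w) (by rw [mem_ball_zero_iff, norm_mul, hrn, hw, mul_one]; exact hr.2)
        (ζ / w) (by rw [norm_div, mem_sphere_zero_iff_norm.1 hζ, hw, div_one])
      rwa [mul_assoc, mul_div_cancel₀ _ hw0, div_sub_one hw0, norm_div, hw, div_one] at h
    refine norm_sub_le_mul_rpow_of_sphere hR hf hα1 hS (mem_ball_zero_iff.1 hw).le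
      (fun ζ hζ ↦ ?_) hz
    rw [norm_sub_rev, norm_sub_rev ζ]
    exact hsphere hζ hw
  have hlim {z : ℂ} (hz : z ∈ ball (0 : ℂ) 1) :
      Tendsto (fun r : ℝ ↦ Φ (r * z)) (𝓝[<] 1) (𝓝 (Φ z)) := by
    have hΦz : ContinuousAt Φ ((1 : ℝ) * z) := by
      rw [ofReal_one, one_mul]
      exact (hΦ.differentiableAt (isOpen_ball.mem_nhds hz)).continuousAt
    have hmul : ContinuousAt (fun r : ℝ ↦ (r : ℂ) * z) 1 := by fun_prop
    have h := (ContinuousAt.comp (f := fun r : ℝ ↦ (r : ℂ) * z) hΦz hmul).tendsto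
    simpa [Function.comp_def] using h.mono_left (nhdsWithin_le_nhds (s := Iio 1))
  refine le_of_tendsto ((hlim hz).sub (hlim hw)).norm ?_
  filter_upwards [Ioo_mem_nhdsLT zero_lt_one] with r using hdil

theorem norm_sub_one_le_two_rpow_mul_rpow {ω : ℂ} {β : ℝ} (hω : ‖ω‖ = 1) (hβ : β ≤ 1) :
    ‖ω - 1‖ ≤ 2 ^ (1 - β) * ‖ω - 1‖ ^ β := by
  rcases (norm_nonneg (ω - 1)).eq_or_lt with h0 | hpos
  · rw [← h0]
    positivity
  have h2 : ‖ω - 1‖ ≤ 2 := (norm_sub_le _ _).trans (by rw [hω, norm_one]; norm_num)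
  calc ‖ω - 1‖ = ‖ω - 1‖ ^ (1 - β) * ‖ω - 1‖ ^ β := by
        rw [← rpow_add hpos, sub_add_cancel, rpow_one]
    _ ≤ 2 ^ (1 - β) * ‖ω - 1‖ ^ β := by
        gcongr

theorem norm_sub_le_mul_rpow_of_rotation {S α : ℝ} (hΦ : DifferentiableOn ℂ Φ (ball 0 1))
    (hα1 : α ≤ 1) (hS : 0 ≤ S)
    (hΦS : ∀ z ∈ ball (0 : ℂ) 1, ∀ ω : ℂ, ‖ω‖ = 1 → ‖Φ (z * ω) - Φ z‖ ≤ S * ‖ω - 1‖ ^ α)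
    (hz : z ∈ ball (0 : ℂ) 1) (hw : w ∈ ball (0 : ℂ) 1) : ‖Φ z - Φ w‖ ≤ S * ‖z - w‖ ^ α := by
  rcases hα1.lt_or_eq with hα1 | rfl
  · exact norm_sub_le_mul_rpow_of_rotation_of_lt_one hΦ hα1 hS hΦS hz hw
  have hlt {β : ℝ} (hβ : β < 1) : ‖Φ z - Φ w‖ ≤ S * 2 ^ (1 - β) * ‖z - w‖ ^ β := by
    refine norm_sub_le_mul_rpow_of_rotation_of_lt_one hΦ hβ (by positivity)
      (fun z hz ω hω ↦ (hΦS z hz ω hω).trans ?_) hz hw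
    rw [rpow_one, mul_assoc]
    gcongr
    exact norm_sub_one_le_two_rpow_mul_rpow hω hβ.le
  have hcont : ContinuousAt (fun β : ℝ ↦ S * 2 ^ (1 - β) * ‖z - w‖ ^ β) 1 :=
    (continuousAt_const.mul (continuousAt_const.rpow (by fun_prop) (.inl two_ne_zero))).mul
      (continuousAt_const.rpow continuousAt_id (.inr one_pos))
  have hlim := hcont.tendsto.mono_left (nhdsWithin_le_nhds (s := Iio 1))
  rw [sub_self, rpow_zero, mul_one] at hlim
  exact ge_of_tendsto hlim (eventually_nhdsWithin_of_forall fun β ↦ hlt)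

theorem norm_mul_sub_le_of_norm_pow_mul {ω : ℂ} {E A : ℝ} {n : ℕ}
    (hΦ : DifferentiableOn ℂ Φ (ball 0 1)) (hω : ‖ω‖ = 1)
    (hE : ∀ z ∈ ball (0 : ℂ) 1, ‖z ^ n * Φ z‖ ≤ E)
    (hA : ∀ z ∈ ball (0 : ℂ) 1, ‖(z * ω) ^ n * Φ (z * ω) - z ^ n * Φ z‖ ≤ A)
    (hz : z ∈ ball (0 : ℂ) 1) : ‖Φ (z * ω) - Φ z‖ ≤ A + n * E * ‖ω - 1‖ := by
  have htwist : ‖ω ^ n * Φ (z * ω) - Φ z‖ ≤ A := by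
    refine norm_le_of_norm_pow_mul_le (Φ := fun z ↦ ω ^ n * Φ (z * ω) - Φ z)
      (((hΦ.comp (by fun_prop) fun _ ↦ mul_mem_ball_zero_one hω).const_mul _).sub hΦ) n
      (fun z hz ↦ ?_) hz
    simpa only [mul_sub, mul_pow, mul_assoc] using hA z hz
  have hpow : ‖ω ^ n - 1‖ ≤ n * ‖ω - 1‖ := by
    rw [← geom_sum_mul, norm_mul]
    gcongr
    refine (norm_sum_le _ _).trans_eq ?_
    simp [hω]
  calc ‖Φ (z * ω) - Φ z‖ = ‖(ω ^ n * Φ (z * ω) - Φ z) - (ω ^ n - 1) * Φ (z * ω)‖ := by ring_nf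
    _ ≤ A + n * ‖ω - 1‖ * E := by
      refine (norm_sub_le _ _).trans (add_le_add htwist ?_)
      rw [norm_mul]
      gcongr
      exact norm_le_of_norm_pow_mul_le hΦ n hE (mul_mem_ball_zero_one hω hz)
    _ = A + n * E * ‖ω - 1‖ := by ring

end MaximumPrinciple

section Crossover

theorem le_mul_rpow_of_crossover {X A B D K α d d₀ : ℝ} (hα0 : 0 ≤ α) (hα1 : α ≤ 1) (hd : 0 < d)
    (hd₀ : 0 < d₀) (hD : 0 ≤ D) (hK : 0 ≤ K) (hX : X ≤ A) (hXd : X ≤ B * d ^ α + D * d)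
    (hA : A ≤ K * d₀ ^ α) (hB : B + D * d₀ ^ (1 - α) ≤ K) : X ≤ K * d ^ α := by
  rcases le_total d₀ d with h | h
  · calc X ≤ K * d₀ ^ α := hX.trans hA
      _ ≤ K * d ^ α := by gcongr
  · have hle : d ^ (1 - α) ≤ d₀ ^ (1 - α) := rpow_le_rpow hd.le h (sub_nonneg.2 hα1)
    calc X ≤ B * d ^ α + D * d := hXd
      _ = (B + D * d ^ (1 - α)) * d ^ α := by
        rw [add_mul, mul_assoc, ← rpow_add hd, sub_add_cancel, rpow_one]
      _ ≤ (B + D * d₀ ^ (1 - α)) * d ^ α := by gcongr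
      _ ≤ K * d ^ α := by gcongr

theorem rpow_le_inv_one_add_mul {q t : ℝ} (hq0 : 0 ≤ q) (hq1 : q ≤ 1) (ht : 0 ≤ t) :
    q ^ t ≤ (1 + t * (1 - q))⁻¹ := by
  have hpos : 0 < 1 + t * (1 - q) := by nlinarith
  have hq : q ≤ exp (-(1 - q)) := by linarith [add_one_le_exp (-(1 - q))]
  calc q ^ t ≤ exp (-(1 - q)) ^ t := rpow_le_rpow hq0 hq ht
    _ = (exp (t * (1 - q)))⁻¹ := by rw [← exp_mul, ← exp_neg]; ring_nf
    _ ≤ (1 + t * (1 - q))⁻¹ := inv_anti₀ hpos (by linarith [add_one_le_exp (t * (1 - q))])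

theorem crossover_inequality {α : ℝ} (hα0 : 0 < α) (hα1 : α ≤ 1) :
    2.233 * (π / 4) ^ α + 1.5 * (1.463 / 1.233) * (π / 4) * 0.822 ^ (1 / α) ≤ 3 := by
  have hπ : π / 4 ≤ 0.7854 := by linarith [pi_lt_d4]
  have hp : (π / 4) ^ α ≤ 1 - 0.2146 * α := by
    have h := rpow_one_add_le_one_add_mul_self (s := π / 4 - 1) (by linarith [pi_pos]) hα0.le hα1
    rw [add_sub_cancel] at h
    nlinarith
  have hq : (0.822 : ℝ) ^ (1 / α) ≤ 0.822 * (0.65 + 0.41 * α) := by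
    have h := rpow_le_inv_one_add_mul (q := 0.822) (t := 1 / α - 1) (by norm_num) (by norm_num)
      (sub_nonneg.2 (by rwa [one_le_div hα0]))
    rw [rpow_sub_one (by norm_num), div_le_iff₀' (by norm_num)] at h
    refine h.trans ?_
    gcongr
    rw [show 1 + (1 / α - 1) * (1 - 0.822) = (0.178 + 0.822 * α) / α by field_simp; ring, inv_div,
      div_le_iff₀ (by positivity)]
    nlinarith [sq_nonneg (α - 0.58)]
  calc _ ≤ 2.233 * (1 - 0.2146 * α) +
        1.5 * (1.463 / 1.233) * 0.7854 * (0.822 * (0.65 + 0.41 * α)) := by gcongr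
    _ ≤ 3 := by linarith

/-- The crossover `d₀ = 0.822 ^ (1 / α) * (π / 4) * σ` makes the bound `2 * E` equal to
`6 * H * d₀ ^ α`. -/
theorem le_six_mul_rpow {X H L d α σ P E : ℝ} (hα0 : 0 < α) (hα1 : α ≤ 1) (hH : 0 ≤ H)
    (hL : 0 < L) (hd : 0 < d) (hσ : σ = 1.463 / (1.233 * L)) (hP : P = 2 * (π / 4) ^ α * H)
    (hE : E = P * (1.233 * σ ^ α)) (hX : X ≤ 2 * E) (hXd : X ≤ 2.233 * P * d ^ α + L * E * d) :
    X ≤ 6 * H * d ^ α := by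
  have hσ0 : 0 < σ := by rw [hσ]; positivity
  have hd₀ : 0 < (0.822 : ℝ) ^ (1 / α) * (π / 4) * σ := by positivity
  have hd₀α : ((0.822 : ℝ) ^ (1 / α) * (π / 4) * σ) ^ α = 0.822 * (π / 4) ^ α * σ ^ α := by
    rw [mul_rpow (by positivity) hσ0.le, mul_rpow (by positivity) (by positivity),
      ← rpow_mul (by norm_num), one_div_mul_cancel hα0.ne', rpow_one]
  have hE0 : 0 ≤ E := by rw [hE, hP]; positivity
  refine le_mul_rpow_of_crossover hα0.le hα1 hd hd₀ (by positivity) (by positivity) hX hXd ?_ ?_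
  · rw [hd₀α, hE, hP]
    linarith
  · have hcross : L * E * ((0.822 : ℝ) ^ (1 / α) * (π / 4) * σ) ^ (1 - α) =
        2 * H * (1.5 * (1.463 / 1.233) * (π / 4) * 0.822 ^ (1 / α)) := by
      rw [rpow_sub hd₀, rpow_one, hd₀α, hE, hP]
      have : σ ^ α ≠ 0 := by positivity
      field_simp
      rw [hσ]
      field_simp
      ring
    rw [hcross, hP]
    linarith [mul_le_mul_of_nonneg_left (crossover_inequality hα0 hα1) hH]

end Crossover

section CauchyExtension

/-- The coefficients of `z * ∑ a_n z ^ n`. -/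
def shiftCoeff (a : ℕ → ℂ) : ℕ → ℂ
  | 0 => 0
  | n + 1 => a n

/-- The extension `C(φ)` of `φ(w) = w * ∑ a_n w ^ n` to the disc, as a function of the
coefficients. -/
noncomputable def cauchyExtension (a : ℕ → ℂ) (z : ℂ) : ℂ := ∑' n, a n * z ^ n

variable {a : ℕ → ℂ} {z : ℂ}

theorem hasSum_shiftCoeff_mul_pow {s : ℂ} (ha : HasSum (fun n ↦ a n * z ^ n) s) :
    HasSum (fun N ↦ shiftCoeff a N * z ^ N) (z * s) := by
  rw [← hasSum_nat_add_iff' 1]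
  simpa [shiftCoeff, pow_succ', mul_left_comm] using ha.mul_left z

theorem mul_derivMultiplier_succ (j : ℕ) {t : ℝ} (ht : t ≠ 0) :
    t * derivMultiplier (j + 1) t = derivMultiplier j t * (t - (j + 1)) := by
  rw [derivMultiplier, Finset.prod_range_succ, ← derivMultiplier]
  field_simp

theorem differentiableOn_iteratedDeriv {E : Type*} [NormedAddCommGroup E] [NormedSpace ℂ E]
    [CompleteSpace E] {F : ℂ → E} {s : Set ℂ} (hF : DifferentiableOn ℂ F s)
    (hs : IsOpen s) (j : ℕ) : DifferentiableOn ℂ (iteratedDeriv j F) s := by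
  rw [iteratedDeriv_eq_iterate]
  exact ((hF.analyticOnNhd hs).iterated_deriv j).differentiableOn

theorem mul_deriv_pow_mul_iteratedDeriv {F : ℂ → ℂ} {j : ℕ}
    (hF : DifferentiableAt ℂ (iteratedDeriv j F) z) :
    z * deriv (fun z ↦ z ^ (j + 1) * iteratedDeriv j F z) z =
      (j + 1) * (z ^ (j + 1) * iteratedDeriv j F z) + z ^ (j + 2) * iteratedDeriv (j + 1) F z := by
  rw [deriv_fun_mul (by fun_prop) hF, deriv_pow_field, iteratedDeriv_succ]
  push_cast
  ring

theorem hasSum_derivMultiplier_mul_pow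
    (ha : ∀ z ∈ ball (0 : ℂ) 1, Summable fun n ↦ a n * z ^ n) (j : ℕ) (hz : z ∈ ball (0 : ℂ) 1) :
    HasSum (fun N : ℕ ↦ (derivMultiplier j N : ℂ) * (N ^ j * shiftCoeff a N) * z ^ N)
      (z ^ (j + 1) * iteratedDeriv j (cauchyExtension a) z) := by
  induction j generalizing z with
  | zero =>
    simpa [derivMultiplier, cauchyExtension] using hasSum_shiftCoeff_mul_pow (ha z hz).hasSum
  | succ j ih =>
    have hderiv : z * deriv (fun z ↦ ∑' N : ℕ,
        (derivMultiplier j N : ℂ) * (N ^ j * shiftCoeff a N) * z ^ N) z =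
        z * deriv (fun z ↦ z ^ (j + 1) * iteratedDeriv j (cauchyExtension a) z) z := by
      congr 1
      refine Filter.EventuallyEq.deriv_eq ?_
      filter_upwards [isOpen_ball.mem_nhds hz] with w hw using (ih hw).tsum_eq
    have h := hasSum_natCast_mul_mul_pow (fun z hz ↦ (ih hz).summable) hz
    have hF : DifferentiableOn ℂ (cauchyExtension a) (ball 0 1) := differentiableOn_tsum_mul_pow ha
    rw [hderiv, mul_deriv_pow_mul_iteratedDeriv <| (differentiableOn_iteratedDeriv hF isOpen_ball
      j).differentiableAt (isOpen_ball.mem_nhds hz)] at h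
    have h' := h.sub ((ih hz).mul_left ((j : ℂ) + 1))
    rw [add_sub_cancel_left] at h'
    refine h'.congr_fun fun N ↦ ?_
    rcases eq_or_ne N 0 with rfl | hN
    · simp [shiftCoeff]
    have hm : (N : ℂ) * derivMultiplier (j + 1) N = derivMultiplier j N * (N - (j + 1)) :=
      mod_cast mul_derivMultiplier_succ j (Nat.cast_ne_zero.2 hN)
    rw [pow_succ]
    linear_combination (N ^ j * shiftCoeff a N * z ^ N) * hm

end CauchyExtension

section DerivMultiplier

variable {u : ℕ → ℂ} {k : ℕ} {z : ℂ}

theorem norm_tsum_derivMultiplier_mul_le {M : ℝ} (hk : k ≠ 0)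
    (hu : ∀ z ∈ ball (0 : ℂ) 1, Summable fun N ↦ u N * z ^ N)
    (hM : ∀ z ∈ ball (0 : ℂ) 1, ‖∑' N, u N * z ^ N‖ ≤ M) (hz : z ∈ ball (0 : ℂ) 1) :
    ‖∑' N : ℕ, (derivMultiplier k N : ℂ) * u N * z ^ N‖ ≤ 2.233 * M := by
  obtain ⟨κ, hκ, hcoeff, hκ1, -⟩ := exists_fourierCoeff_eq_one_sub_derivMultiplier (T := 1) hk
  have h := norm_tsum_one_sub_fourierCoeff_mul_le hκ hκ1 hu hM hz
  simp only [hcoeff, Complex.ofReal_sub, Complex.ofReal_one, sub_sub_cancel] at h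
  exact h.trans_eq (by ring)

theorem norm_tsum_derivMultiplier_mul_le_of_holder {P σ α : ℝ} (hk : k ≠ 0)
    (hσ : σ = 1.463 / (1.233 * (k + 1))) (hα0 : 0 ≤ α) (hα1 : α ≤ 1)
    (hu : ∀ z ∈ ball (0 : ℂ) 1, Summable fun N ↦ u N * z ^ N) (hP : 0 ≤ P)
    (hM : ∀ z ∈ ball (0 : ℂ) 1, ∀ ω : ℂ, ‖ω‖ = 1 →
      ‖∑' N, u N * z ^ N - ∑' N, u N * (z * ω) ^ N‖ ≤ P * ‖1 - ω‖ ^ α)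
    (hz : z ∈ ball (0 : ℂ) 1) :
    ‖∑' N : ℕ, (derivMultiplier k N : ℂ) * u N * z ^ N‖ ≤ P * (1.233 * σ ^ α) := by
  obtain ⟨κ, hκ, hcoeff, hκ1, hκσ⟩ := exists_fourierCoeff_eq_one_sub_derivMultiplier (T := 1) hk
  have h0 : fourierCoeff κ 0 = 1 := by
    have hm : derivMultiplier k 0 = 0 := by simpa using derivMultiplier_natCast_eq_zero hk k.zero_le
    simpa [hm] using hcoeff 0
  have hσ0 : 0 < σ := by rw [hσ]; positivity
  have hcσ : ∫ t, ‖κ t‖ * ‖1 - fourier (-1) t‖ ∂AddCircle.haarAddCircle ≤ 1.233 * σ := by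
    rw [hσ, ← mul_div_assoc, mul_div_mul_left _ _ (by norm_num), le_div_iff₀' (by positivity)]
    exact hκσ
  have h := norm_tsum_one_sub_fourierCoeff_mul_le_of_holder hκ h0 hσ0 hα0 hα1 hκ1 hcσ hu hP hM hz
  simpa only [hcoeff, Complex.ofReal_sub, Complex.ofReal_one, sub_sub_cancel] using h

end DerivMultiplier

section BoundaryRegularity

variable {a : ℕ → ℂ} {z : ℂ}

theorem norm_tsum_natCast_pow_mul_sub_le {j : ℕ} {b : ℕ → ℂ} {g : ℝ → ℂ} {τ M : ℝ}
    (hb : Summable fun N ↦ ‖b N‖)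
    (hbg : ∀ θ : ℝ, HasSum (fun N ↦ b N * Complex.exp (θ * Complex.I) ^ N) (g θ))
    (hg : ContDiff ℝ j g) (hM : ∀ θ, ‖iteratedDeriv j g (θ + τ) - iteratedDeriv j g θ‖ ≤ M)
    (hz : z ∈ ball (0 : ℂ) 1) :
    ‖∑' N : ℕ, (N : ℂ) ^ j * b N * (z * Complex.exp (τ * Complex.I)) ^ N -
      ∑' N : ℕ, (N : ℂ) ^ j * b N * z ^ N‖ ≤ M := by
  set ω := Complex.exp (τ * Complex.I) with hω
  have hω1 : ‖ω‖ = 1 := Complex.norm_exp_ofReal_mul_I τ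
  have hb1 : Summable fun N ↦ ‖b N * (ω ^ N - 1)‖ := by
    refine .of_nonneg_of_le (fun _ ↦ norm_nonneg _) (fun N ↦ ?_) (hb.mul_right 2)
    rw [norm_mul]
    gcongr
    refine (norm_sub_le _ _).trans_eq ?_
    rw [norm_pow, hω1, one_pow, norm_one, one_add_one_eq_two]
  have hbg1 (θ : ℝ) : HasSum (fun N ↦ b N * (ω ^ N - 1) * Complex.exp (θ * Complex.I) ^ N)
      (g (θ + τ) - g θ) := by
    refine ((hbg (θ + τ)).sub (hbg θ)).congr_fun fun N ↦ ?_
    rw [Complex.ofReal_add, add_mul, Complex.exp_add, ← hω]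
    ring
  have hgτ : ContDiff ℝ j fun θ ↦ g (θ + τ) := hg.comp (by fun_prop)
  have hMτ (θ : ℝ) : ‖iteratedDeriv j (fun θ ↦ g (θ + τ) - g θ) θ‖ ≤ M := by
    rw [iteratedDeriv_fun_sub hgτ.contDiffAt hg.contDiffAt, iteratedDeriv_comp_add_const]
    exact hM θ
  have hsum {z : ℂ} (hz : z ∈ ball (0 : ℂ) 1) := summable_natCast_pow_mul_mul_pow
    (fun z hz ↦ summable_norm_mul_pow hb (mem_ball_zero_iff.1 hz).le) j hz
  rw [← (hsum (mul_mem_ball_zero_one hω1 hz)).tsum_sub (hsum hz)]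
  refine (congrArg norm (tsum_congr fun N ↦ ?_)).trans_le
    (norm_tsum_natCast_pow_mul_le hb1 hbg1 (hgτ.sub hg) hMτ hz)
  ring

end BoundaryRegularity

/-- The expansion `φ(w) = w * ∑ a_n w ^ n` on the unit circle. -/
def HasCircleExpansion (a : ℕ → ℂ) (φ : ℂ → ℂ) : Prop :=
  ∀ w ∈ sphere (0 : ℂ) 1, HasSum (fun n ↦ a n * w ^ n) (φ w / w)

namespace HasCircleExpansion

variable {a : ℕ → ℂ} {z ω : ℂ} {k : ℕ} {α : ℝ} {φ : ℂ → ℂ}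

theorem summable_norm (ha : HasCircleExpansion a φ) : Summable fun n ↦ ‖a n‖ := by
  simpa using (ha 1 (by simp)).summable.norm

theorem summable_norm_shiftCoeff (ha : HasCircleExpansion a φ) :
    Summable fun N ↦ ‖shiftCoeff a N‖ :=
  (summable_nat_add_iff 1).1 ha.summable_norm

theorem summable_mul_pow (ha : HasCircleExpansion a φ) (z : ℂ) (hz : z ∈ ball (0 : ℂ) 1) :
    Summable fun n ↦ a n * z ^ n :=
  summable_norm_mul_pow ha.summable_norm (mem_ball_zero_iff.1 hz).le

theorem summable_natCast_pow_mul_shiftCoeff (ha : HasCircleExpansion a φ) (k : ℕ) (z : ℂ)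
    (hz : z ∈ ball (0 : ℂ) 1) : Summable fun N : ℕ ↦ (N : ℂ) ^ k * shiftCoeff a N * z ^ N :=
  summable_natCast_pow_mul_mul_pow (fun _ hz ↦
    (hasSum_shiftCoeff_mul_pow (ha.summable_mul_pow _ hz).hasSum).summable) k hz

theorem differentiableOn_cauchyExtension (ha : HasCircleExpansion a φ) :
    DifferentiableOn ℂ (cauchyExtension a) (ball 0 1) :=
  differentiableOn_tsum_mul_pow ha.summable_mul_pow

theorem differentiableOn_iteratedDeriv_cauchyExtension (ha : HasCircleExpansion a φ) (k : ℕ) :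
    DifferentiableOn ℂ (iteratedDeriv k (cauchyExtension a)) (ball 0 1) :=
  differentiableOn_iteratedDeriv ha.differentiableOn_cauchyExtension isOpen_ball k

theorem continuousOn_cauchyExtension (ha : HasCircleExpansion a φ) :
    ContinuousOn (cauchyExtension a) (closedBall 0 1) := by
  rw [← closure_ball 0 one_ne_zero]
  exact (diffContOnCl_tsum_mul_pow ha.summable_norm).continuousOn

theorem hasSum_circParam (ha : HasCircleExpansion a φ) (θ : ℝ) :
    HasSum (fun N ↦ shiftCoeff a N * Complex.exp (θ * Complex.I) ^ N) (circParam φ θ) := by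
  have h := hasSum_shiftCoeff_mul_pow
    (ha _ (mem_sphere_zero_iff_norm.2 (Complex.norm_exp_ofReal_mul_I θ)))
  rwa [mul_div_cancel₀ _ (Complex.exp_ne_zero _)] at h

theorem tsum_derivMultiplier_mul (ha : HasCircleExpansion a φ) (k : ℕ)
    (hz : z ∈ ball (0 : ℂ) 1) :
    ∑' N : ℕ, (derivMultiplier k N : ℂ) * (N ^ k * shiftCoeff a N) * z ^ N =
      z ^ (k + 1) * iteratedDeriv k (cauchyExtension a) z :=
  (hasSum_derivMultiplier_mul_pow ha.summable_mul_pow k hz).tsum_eq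

theorem norm_tsum_natCast_pow_mul_le (ha : HasCircleExpansion a φ)
    (hφ : ContDiff ℝ k (circParam φ)) (hz : z ∈ ball (0 : ℂ) 1) :
    ‖∑' N : ℕ, (N : ℂ) ^ k * shiftCoeff a N * z ^ N‖ ≤ circleDerivSup k φ :=
  _root_.norm_tsum_natCast_pow_mul_le ha.summable_norm_shiftCoeff ha.hasSum_circParam hφ
    (norm_iteratedDeriv_circParam_le hφ) hz

theorem norm_tsum_natCast_pow_mul_sub_le (ha : HasCircleExpansion a φ) (hα0 : 0 < α) (hα1 : α ≤ 1)
    (hφ : MemHolderCircle k α φ) (hω : ‖ω‖ = 1) (hz : z ∈ ball (0 : ℂ) 1) :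
    ‖∑' N : ℕ, (N : ℂ) ^ k * shiftCoeff a N * (z * ω) ^ N -
      ∑' N : ℕ, (N : ℂ) ^ k * shiftCoeff a N * z ^ N‖ ≤
      2 * (π / 4) ^ α * circleHolderSeminorm k α φ * ‖ω - 1‖ ^ α := by
  obtain ⟨τ, rfl⟩ := (Complex.norm_eq_one_iff ω).1 hω
  exact _root_.norm_tsum_natCast_pow_mul_sub_le ha.summable_norm_shiftCoeff ha.hasSum_circParam
    hφ.1 (fun θ ↦ norm_iteratedDeriv_circParam_add_sub_le hα0 hα1 hφ θ τ) hz

theorem norm_mul_cauchyExtension_le (ha : HasCircleExpansion a φ)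
    (hφ : Continuous (circParam φ)) (hz : z ∈ ball (0 : ℂ) 1) :
    ‖z ^ 1 * cauchyExtension a z‖ ≤ circleDerivSup 0 φ := by
  have h := ha.norm_tsum_natCast_pow_mul_le (contDiff_zero.2 hφ) hz
  simpa [cauchyExtension, (hasSum_shiftCoeff_mul_pow (ha.summable_mul_pow z hz).hasSum).tsum_eq]
    using h

theorem norm_cauchyExtension_le (ha : HasCircleExpansion a φ) (hφ : Continuous (circParam φ))
    (hz : z ∈ ball (0 : ℂ) 1) : ‖cauchyExtension a z‖ ≤ circleDerivSup 0 φ :=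
  norm_le_of_norm_pow_mul_le ha.differentiableOn_cauchyExtension 1
    (fun _ ↦ ha.norm_mul_cauchyExtension_le hφ) hz

theorem norm_iteratedDeriv_cauchyExtension_le (ha : HasCircleExpansion a φ) (hk : k ≠ 0)
    (hφ : ContDiff ℝ k (circParam φ)) (hz : z ∈ ball (0 : ℂ) 1) :
    ‖iteratedDeriv k (cauchyExtension a) z‖ ≤ 2.233 * circleDerivSup k φ := by
  refine norm_le_of_norm_pow_mul_le (ha.differentiableOn_iteratedDeriv_cauchyExtension k) (k + 1)
    (fun z hz ↦ ?_) hz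
  rw [← ha.tsum_derivMultiplier_mul k hz]
  exact norm_tsum_derivMultiplier_mul_le hk (ha.summable_natCast_pow_mul_shiftCoeff k)
    (fun _ ↦ ha.norm_tsum_natCast_pow_mul_le hφ) hz

theorem norm_pow_mul_iteratedDeriv_sub_le (ha : HasCircleExpansion a φ) (hk : k ≠ 0)
    (hα0 : 0 < α) (hα1 : α ≤ 1) (hφ : MemHolderCircle k α φ) (hω : ‖ω‖ = 1)
    (hz : z ∈ ball (0 : ℂ) 1) :
    ‖(z * ω) ^ (k + 1) * iteratedDeriv k (cauchyExtension a) (z * ω) -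
      z ^ (k + 1) * iteratedDeriv k (cauchyExtension a) z‖ ≤
      2.233 * (2 * (π / 4) ^ α * circleHolderSeminorm k α φ * ‖ω - 1‖ ^ α) := by
  set u : ℕ → ℂ := fun N ↦ N ^ k * shiftCoeff a N
  have hsum (z : ℂ) (hz : z ∈ ball (0 : ℂ) 1) :
      HasSum (fun N ↦ u N * (ω ^ N - 1) * z ^ N) (∑' N, u N * (z * ω) ^ N - ∑' N, u N * z ^ N) := by
    refine ((ha.summable_natCast_pow_mul_shiftCoeff k _
      (mul_mem_ball_zero_one hω hz)).hasSum.sub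
      (ha.summable_natCast_pow_mul_shiftCoeff k _ hz).hasSum).congr_fun fun N ↦ ?_
    ring
  have h := norm_tsum_derivMultiplier_mul_le hk (fun z hz ↦ (hsum z hz).summable)
    (fun z hz ↦ (hsum z hz).tsum_eq ▸
      ha.norm_tsum_natCast_pow_mul_sub_le hα0 hα1 hφ hω hz) hz
  rw [← ha.tsum_derivMultiplier_mul k hz,
    ← ha.tsum_derivMultiplier_mul k (mul_mem_ball_zero_one hω hz), ← Summable.tsum_sub]
  · refine (congrArg norm (tsum_congr fun N ↦ ?_)).trans_le h
    ring
  · exact (hasSum_derivMultiplier_mul_pow ha.summable_mul_pow k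
      (mul_mem_ball_zero_one hω hz)).summable
  · exact (hasSum_derivMultiplier_mul_pow ha.summable_mul_pow k hz).summable

theorem norm_iteratedDeriv_cauchyExtension_mul_sub_le (ha : HasCircleExpansion a φ) (hk : k ≠ 0)
    (hα0 : 0 < α) (hα1 : α ≤ 1) (hφ : MemHolderCircle k α φ) (hω : ‖ω‖ = 1)
    (hz : z ∈ ball (0 : ℂ) 1) :
    ‖iteratedDeriv k (cauchyExtension a) (z * ω) - iteratedDeriv k (cauchyExtension a) z‖ ≤
      6 * circleHolderSeminorm k α φ * ‖ω - 1‖ ^ α := by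
  rcases (norm_nonneg (ω - 1)).eq_or_lt with h0 | hpos
  · rw [sub_eq_zero.1 (norm_eq_zero.1 h0.symm)]
    simp [zero_rpow hα0.ne']
  set Φ := iteratedDeriv k (cauchyExtension a)
  have hH := circleHolderSeminorm_nonneg k α φ
  set P := 2 * (π / 4) ^ α * circleHolderSeminorm k α φ
  set σ : ℝ := 1.463 / (1.233 * (k + 1))
  have hΦ := ha.differentiableOn_iteratedDeriv_cauchyExtension k
  have hE (z : ℂ) (hz : z ∈ ball (0 : ℂ) 1) : ‖z ^ (k + 1) * Φ z‖ ≤ P * (1.233 * σ ^ α) := by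
    rw [← ha.tsum_derivMultiplier_mul k hz]
    refine norm_tsum_derivMultiplier_mul_le_of_holder hk rfl hα0.le hα1
      (ha.summable_natCast_pow_mul_shiftCoeff k) (by positivity) (fun z hz ω hω ↦ ?_) hz
    rw [norm_sub_rev, norm_sub_rev 1]
    exact ha.norm_tsum_natCast_pow_mul_sub_le hα0 hα1 hφ hω hz
  have hle {z : ℂ} (hz : z ∈ ball (0 : ℂ) 1) := norm_le_of_norm_pow_mul_le hΦ (k + 1) hE hz
  have htwo : ‖Φ (z * ω) - Φ z‖ ≤ 2 * (P * (1.233 * σ ^ α)) := by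
    linarith [norm_sub_le (Φ (z * ω)) (Φ z), hle hz, hle (mul_mem_ball_zero_one hω hz)]
  have hlin := norm_mul_sub_le_of_norm_pow_mul hΦ hω hE
    (fun z hz ↦ ha.norm_pow_mul_iteratedDeriv_sub_le hk hα0 hα1 hφ hω hz) hz
  rw [← mul_assoc, Nat.cast_succ] at hlin
  exact le_six_mul_rpow hα0 hα1 hH (by positivity) hpos rfl rfl rfl htwo hlin

theorem norm_cauchyExtension_mul_sub_le (ha : HasCircleExpansion a φ) (hα0 : 0 < α) (hα1 : α ≤ 1)
    (hφ : MemHolderCircle 0 α φ) (hω : ‖ω‖ = 1) (hz : z ∈ ball (0 : ℂ) 1) :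
    ‖cauchyExtension a (z * ω) - cauchyExtension a z‖ ≤
      (2 * circleHolderSeminorm 0 α φ + 2 * circleDerivSup 0 φ) * ‖ω - 1‖ ^ α := by
  have hH := circleHolderSeminorm_nonneg 0 α φ
  have hM := circleDerivSup_nonneg 0 φ
  have hA (z : ℂ) (hz : z ∈ ball (0 : ℂ) 1) :
      ‖(z * ω) ^ 1 * cauchyExtension a (z * ω) - z ^ 1 * cauchyExtension a z‖ ≤
        2 * (π / 4) ^ α * circleHolderSeminorm 0 α φ * ‖ω - 1‖ ^ α := by
    simpa [cauchyExtension, (hasSum_shiftCoeff_mul_pow (ha.summable_mul_pow _ _).hasSum).tsum_eq,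
      hz, mul_mem_ball_zero_one hω hz]
      using ha.norm_tsum_natCast_pow_mul_sub_le hα0 hα1 hφ hω hz
  have h := norm_mul_sub_le_of_norm_pow_mul ha.differentiableOn_cauchyExtension hω
    (fun _ ↦ ha.norm_mul_cauchyExtension_le hφ.1.continuous) hA hz
  have hπ : (π / 4) ^ α ≤ 1 := rpow_le_one (by positivity) (by linarith [pi_le_four]) hα0.le
  have hd : ‖ω - 1‖ ≤ 2 * ‖ω - 1‖ ^ α := by
    refine (norm_sub_one_le_two_rpow_mul_rpow hω hα1).trans ?_
    gcongr
    exact rpow_le_self_of_one_le one_le_two (by linarith)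
  rw [Nat.cast_one, one_mul] at h
  calc _ ≤ _ := h
    _ ≤ 2 * 1 * circleHolderSeminorm 0 α φ * ‖ω - 1‖ ^ α +
        circleDerivSup 0 φ * (2 * ‖ω - 1‖ ^ α) := by gcongr
    _ = _ := by ring

end HasCircleExpansion

section ExtensionToClosure

theorem exists_continuousOn_closure_eqOn {X Y : Type*} [UniformSpace X] [UniformSpace Y]
    [CompleteSpace Y] [T2Space Y] {f : X → Y} {s : Set X} (hf : UniformContinuousOn f s) :
    ∃ g, ContinuousOn g (closure s) ∧ EqOn g f s := by
  refine ⟨extendFrom s f, continuousOn_extendFrom subset_rfl fun x hx ↦ ?_,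
    fun x hx ↦ extendFrom_eq (subset_closure hx) (hf.continuousOn x hx)⟩
  have := mem_closure_iff_nhdsWithin_neBot.1 hx
  exact CompleteSpace.complete ((cauchy_nhds.mono nhdsWithin_le_nhds).map_of_le hf
    (Filter.le_principal_iff.2 self_mem_nhdsWithin))

variable {V W : Type*} [SeminormedAddCommGroup V] [SeminormedAddCommGroup W] {f : V → W} {s : Set V}
  {x y : V} {S α : ℝ}

theorem uniformContinuousOn_of_norm_sub_le_mul_rpow (hα : 0 < α) (hS : 0 ≤ S)
    (hf : ∀ x ∈ s, ∀ y ∈ s, ‖f x - f y‖ ≤ S * ‖x - y‖ ^ α) : UniformContinuousOn f s := by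
  lift α to NNReal using hα.le
  lift S to NNReal using hS
  have h : HolderOnWith S α f s := fun x hx y hy ↦ by
    rw [edist_nndist, edist_nndist, ← ENNReal.coe_rpow_of_nonneg _ α.coe_nonneg, ← ENNReal.coe_mul,
      ENNReal.coe_le_coe, ← NNReal.coe_le_coe]
    simpa [dist_eq_norm] using hf x hx y hy
  exact h.uniformContinuousOn (mod_cast hα)

theorem norm_sub_le_mul_rpow_on_closure (hα : 0 ≤ α) (hfc : ContinuousOn f (closure s))
    (hf : ∀ x ∈ s, ∀ y ∈ s, ‖f x - f y‖ ≤ S * ‖x - y‖ ^ α) (hx : x ∈ closure s)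
    (hy : y ∈ closure s) : ‖f x - f y‖ ≤ S * ‖x - y‖ ^ α := by
  refine le_on_closure (f := fun p : V × V ↦ ‖f p.1 - f p.2‖)
    (g := fun p ↦ S * ‖p.1 - p.2‖ ^ α) (s := s ×ˢ s) (fun p hp ↦ hf _ hp.1 _ hp.2) ?_ ?_
    (x := (x, y)) (by rw [closure_prod_eq]; exact ⟨hx, hy⟩)
  · rw [closure_prod_eq]
    exact ((hfc.comp continuousOn_fst fun p hp ↦ hp.1).sub
      (hfc.comp continuousOn_snd fun p hp ↦ hp.2)).norm
  · exact (continuous_const.mul ((by fun_prop : Continuous fun p : V × V ↦ ‖p.1 - p.2‖).rpow_const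
      fun _ ↦ .inr hα)).continuousOn

end ExtensionToClosure

section ClosedDisc

open Filter Topology

variable {E : Type*} [NormedAddCommGroup E] [NormedSpace ℂ E] {f : ℂ → E} {s : Set ℂ} {x y : ℂ}
  {k : ℕ}

theorem iteratedFDerivWithin_real_eq (hs : UniqueDiffOn ℝ s) (hf : ContDiffOn ℂ k f s)
    (hx : x ∈ s) : iteratedFDerivWithin ℝ k f s x =
      (ContinuousMultilinearMap.piFieldEquiv ℂ (Fin k) E
        (iteratedDerivWithin k f s x)).restrictScalars ℝ := by
  rw [← ((hf x hx).restrictScalars_iteratedFDerivWithin_eventuallyEq hs hx).eq_of_nhdsWithin hx,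
    iteratedFDerivWithin_eq_equiv_comp]
  rfl

theorem norm_iteratedFDerivWithin_real (hs : UniqueDiffOn ℝ s) (hf : ContDiffOn ℂ k f s)
    (hx : x ∈ s) : ‖iteratedFDerivWithin ℝ k f s x‖ = ‖iteratedDerivWithin k f s x‖ := by
  rw [iteratedFDerivWithin_real_eq hs hf hx, ContinuousMultilinearMap.norm_restrictScalars,
    LinearIsometryEquiv.norm_map]

theorem norm_iteratedFDerivWithin_real_sub (hs : UniqueDiffOn ℝ s) (hf : ContDiffOn ℂ k f s)
    (hx : x ∈ s) (hy : y ∈ s) :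
    ‖iteratedFDerivWithin ℝ k f s x - iteratedFDerivWithin ℝ k f s y‖ =
      ‖iteratedDerivWithin k f s x - iteratedDerivWithin k f s y‖ := by
  rw [iteratedFDerivWithin_real_eq hs hf hx, iteratedFDerivWithin_real_eq hs hf hy,
    ← LinearIsometryEquiv.norm_map (ContinuousMultilinearMap.piFieldEquiv ℂ (Fin k) E)
      (iteratedDerivWithin k f s x - _), map_sub]
  rfl

theorem hasDerivWithinAt_closure_of_continuousOn {f' : ℂ → E} (hs : IsOpen s) (hs' : Convex ℝ s)
    (hf : ContinuousOn f (closure s)) (hf' : ContinuousOn f' (closure s))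
    (hff' : ∀ x ∈ s, HasDerivAt f (f' x) x) (hx : x ∈ closure s) :
    HasDerivWithinAt f (f' x) (closure s) x := by
  set L : E →L[ℝ] ℂ →L[ℝ] E :=
    (ContinuousLinearMap.restrictScalarsL ℂ ℂ E ℝ ℝ).comp
      ((ContinuousLinearMap.toSpanSingletonCLE).toContinuousLinearMap.restrictScalars ℝ)
  have hL (x : ℂ) (hx : x ∈ s) : HasFDerivAt f (L (f' x)) x :=
    (hff' x hx).hasFDerivAt.restrictScalars ℝ
  refine HasFDerivWithinAt.of_restrictScalars ℝ (hasFDerivWithinAt_closure_of_tendsto_fderiv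
    (fun x hx ↦ (hL x hx).differentiableAt.differentiableWithinAt) hs' hs
    (fun x hx ↦ (hf x hx).mono subset_closure) ?_) rfl
  have hlim : Tendsto (fun x ↦ L (f' x)) (𝓝[s] x) (𝓝 (L (f' x))) :=
    (L.continuous.tendsto _).comp ((hf' x hx).mono_left (nhdsWithin_mono x subset_closure))
  refine hlim.congr' ?_
  filter_upwards [self_mem_nhdsWithin] with y hy using (hL y hy).fderiv.symm

theorem uniqueDiffOn_closure_of_convex (hs : IsOpen s) (hs' : Convex ℝ s) :
    UniqueDiffOn ℝ (closure s) := by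
  rcases s.eq_empty_or_nonempty with rfl | hne
  · simpa using uniqueDiffOn_empty
  · exact uniqueDiffOn_convex hs'.closure (hne.mono (interior_maximal subset_closure hs))

variable [CompleteSpace E]

theorem contDiffOn_closure_of_uniformContinuousOn (hs : IsOpen s) (hs' : Convex ℝ s)
    (hf : DifferentiableOn ℂ f s) (hfc : ContinuousOn f (closure s))
    (hfk : ∀ j ≤ k, UniformContinuousOn (iteratedDeriv j f) s) :
    ContDiffOn ℂ k f (closure s) := by
  have hu : UniqueDiffOn ℂ (closure s) := (uniqueDiffOn_closure_of_convex hs hs').mono_field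
  have hex (j : ℕ) : ∃ g, j ≤ k → ContinuousOn g (closure s) ∧ EqOn g (iteratedDeriv j f) s := by
    by_cases hj : j ≤ k
    · simpa [hj] using exists_continuousOn_closure_eqOn (hfk j hj)
    · exact ⟨f, fun h ↦ absurd h hj⟩
  choose D hD using hex
  have hderiv {j : ℕ} (hj : j < k) {x : ℂ} (hx : x ∈ closure s) :
      HasDerivWithinAt (D j) (D (j + 1) x) (closure s) x := by
    refine hasDerivWithinAt_closure_of_continuousOn hs hs' (hD j hj.le).1 (hD (j + 1) hj).1
      (fun x hx ↦ ?_) hx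
    rw [(hD (j + 1) hj).2 hx, iteratedDeriv_succ]
    have hj' := (differentiableOn_iteratedDeriv hf hs j).differentiableAt (hs.mem_nhds hx)
    exact hj'.hasDerivAt.congr_of_eventuallyEq ((hD j hj.le).2.eventuallyEq_of_mem (hs.mem_nhds hx))
  have heq {j : ℕ} (hj : j ≤ k) : EqOn (iteratedDerivWithin j f (closure s)) (D j) (closure s) := by
    induction j with
    | zero =>
      rw [iteratedDerivWithin_zero]
      refine EqOn.of_subset_closure (fun x hx ↦ ?_) hfc (hD 0 hj).1 subset_closure subset_rfl
      rw [(hD 0 hj).2 hx, iteratedDeriv_zero]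
    | succ j ih =>
      intro x hx
      rw [iteratedDerivWithin_succ, derivWithin_congr (ih (by lia)) (ih (by lia) hx),
        (hderiv hj hx).derivWithin (hu x hx)]
  rw [contDiffOn_nat_iff_continuousOn_differentiableOn_deriv hu]
  exact ⟨fun j hj ↦ (hD j hj).1.congr (heq hj), fun j hj x hx ↦
    ((hderiv hj hx).differentiableWithinAt).congr (heq hj.le) (heq hj.le hx)⟩

theorem iteratedDerivWithin_closure_eqOn_iteratedDeriv (hs : IsOpen s) (hs' : Convex ℝ s)
    (hf : DifferentiableOn ℂ f s) :
    EqOn (iteratedDerivWithin k f (closure s)) (iteratedDeriv k f) s := fun _ hx ↦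
  iteratedDerivWithin_eq_iteratedDeriv (uniqueDiffOn_closure_of_convex hs hs').mono_field
    (hf.analyticOnNhd hs _ hx).contDiffAt (subset_closure hx)

theorem contDiffOn_closure_of_holder {S α : ℝ} {M : ℕ → ℝ} (hs : IsOpen s) (hs' : Convex ℝ s)
    (hf : DifferentiableOn ℂ f s) (hfc : ContinuousOn f (closure s)) (hα : 0 < α) (hS : 0 ≤ S)
    (hM : ∀ j ≤ k, ∀ x ∈ s, ‖iteratedDeriv j f x‖ ≤ M j)
    (hfS : ∀ x ∈ s, ∀ y ∈ s,
      ‖iteratedDeriv k f x - iteratedDeriv k f y‖ ≤ S * ‖x - y‖ ^ α) :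
    ContDiffOn ℂ k f (closure s) := by
  refine contDiffOn_closure_of_uniformContinuousOn hs hs' hf hfc fun j hj ↦ ?_
  rcases hj.eq_or_lt with rfl | hj
  · exact uniformContinuousOn_of_norm_sub_le_mul_rpow hα hS hfS
  · refine (hs'.lipschitzOnWith_of_nnnorm_deriv_le (C := (M (j + 1)).toNNReal) (fun x hx ↦
      (differentiableOn_iteratedDeriv hf hs j).differentiableAt (hs.mem_nhds hx))
      fun x hx ↦ ?_).uniformContinuousOn
    rw [← iteratedDeriv_succ]
    exact NNReal.le_toNNReal_of_coe_le (hM (j + 1) hj x hx)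

theorem memHolderDisc_and_discHolderNorm_le {f : ℂ → ℂ} {S α : ℝ} {M : ℕ → ℝ}
    (hf : DifferentiableOn ℂ f (ball 0 1)) (hfc : ContinuousOn f (closedBall 0 1)) (hα : 0 < α)
    (hS : 0 ≤ S) (hM : ∀ j ≤ k, ∀ x ∈ ball (0 : ℂ) 1, ‖iteratedDeriv j f x‖ ≤ M j)
    (hfS : ∀ x ∈ ball (0 : ℂ) 1, ∀ y ∈ ball (0 : ℂ) 1,
      ‖iteratedDeriv k f x - iteratedDeriv k f y‖ ≤ S * ‖x - y‖ ^ α) :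
    MemHolderDisc k α f ∧ discHolderNorm k α f ≤ ∑ j ∈ Finset.range (k + 1), M j + S := by
  unfold MemHolderDisc discHolderNorm
  simp only [← closure_ball (0 : ℂ) one_ne_zero] at hfc ⊢
  have hc := convex_ball (0 : ℂ) 1
  have hu := uniqueDiffOn_closure_of_convex isOpen_ball hc
  have hCD := contDiffOn_closure_of_holder isOpen_ball hc hf hfc hα hS hM hfS
  have hcont {j : ℕ} (hj : j ≤ k) :
      ContinuousOn (iteratedDerivWithin j f (closure (ball 0 1))) (closure (ball 0 1)) :=
    hCD.continuousOn_iteratedDerivWithin (mod_cast hj) hu.mono_field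
  have heq (j : ℕ) := iteratedDerivWithin_closure_eqOn_iteratedDeriv (k := j) isOpen_ball hc hf
  have hsup {j : ℕ} (hj : j ≤ k) {x : ℂ} (hx : x ∈ closure (ball (0 : ℂ) 1)) :
      ‖iteratedFDerivWithin ℝ j f (closure (ball 0 1)) x‖ ≤ M j := by
    rw [norm_iteratedFDerivWithin_real hu (hCD.of_le (mod_cast hj)) hx]
    exact le_on_closure (fun x hx ↦ by rw [heq j hx]; exact hM j hj x hx) (hcont hj).norm
      continuousOn_const hx
  have hholder {x y : ℂ} (hx : x ∈ closure (ball (0 : ℂ) 1)) (hy : y ∈ closure (ball (0 : ℂ) 1)) :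
      ‖iteratedFDerivWithin ℝ k f (closure (ball 0 1)) x -
        iteratedFDerivWithin ℝ k f (closure (ball 0 1)) y‖ ≤ S * ‖x - y‖ ^ α := by
    rw [norm_iteratedFDerivWithin_real_sub hu hCD hx hy]
    exact norm_sub_le_mul_rpow_on_closure hα.le (hcont le_rfl)
      (fun x hx y hy ↦ by rw [heq k hx, heq k hy]; exact hfS x hx y hy) hx hy
  refine ⟨⟨hCD.restrict_scalars ℝ, S, fun x hx y hy ↦ hholder hx hy⟩,
    add_le_add (Finset.sum_le_sum fun j hj ↦ ?_) (Real.sSup_le ?_ hS)⟩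
  · have hj : j ≤ k := Finset.mem_range_succ_iff.1 hj
    refine Real.sSup_le ?_ ((norm_nonneg _).trans (hM j hj 0 (mem_ball_self one_pos)))
    rintro _ ⟨x, hx, rfl⟩
    exact hsup hj hx
  · rintro _ ⟨x, hx, y, hy, hxy, rfl⟩
    rw [div_le_iff₀ (rpow_pos_of_pos (norm_pos_iff.2 (sub_ne_zero.2 hxy)) _)]
    exact hholder hx hy

end ClosedDisc

namespace HasCircleExpansion

variable {a : ℕ → ℂ} {k : ℕ} {α : ℝ} {φ : ℂ → ℂ}

theorem memHolderDisc_and_discHolderNorm_le_of_ne_zero (ha : HasCircleExpansion a φ) (hk : k ≠ 0)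
    (hα0 : 0 < α) (hα1 : α ≤ 1) (hφ : MemHolderCircle k α φ) :
    MemHolderDisc k α (cauchyExtension a) ∧
      discHolderNorm k α (cauchyExtension a) ≤ 6 * circleHolderNorm k α φ := by
  have hH := circleHolderSeminorm_nonneg k α φ
  have h := memHolderDisc_and_discHolderNorm_le ha.differentiableOn_cauchyExtension
    ha.continuousOn_cauchyExtension hα0 (S := 6 * circleHolderSeminorm k α φ) (by positivity)
    (M := fun j ↦ 6 * circleDerivSup j φ) (k := k) (fun j hj x hx ↦ ?_) fun x hx y hy ↦
      norm_sub_le_mul_rpow_of_rotation (ha.differentiableOn_iteratedDeriv_cauchyExtension k) hα1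
        (by positivity) (fun z hz ω hω ↦
          ha.norm_iteratedDeriv_cauchyExtension_mul_sub_le hk hα0 hα1 hφ hω hz) hx hy
  · rwa [← Finset.mul_sum, ← mul_add, ← circleHolderNorm_eq] at h
  · have hM := circleDerivSup_nonneg j φ
    have hφj : ContDiff ℝ j (circParam φ) := hφ.1.of_le (mod_cast hj)
    rcases eq_or_ne j 0 with rfl | hj0
    · rw [iteratedDeriv_zero]
      linarith [ha.norm_cauchyExtension_le hφj.continuous hx]
    · linarith [ha.norm_iteratedDeriv_cauchyExtension_le hj0 hφj hx]

theorem memHolderDisc_and_discHolderNorm_le_of_eq_zero (ha : HasCircleExpansion a φ)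
    (hα0 : 0 < α) (hα1 : α ≤ 1) (hφ : MemHolderCircle 0 α φ) :
    MemHolderDisc 0 α (cauchyExtension a) ∧
      discHolderNorm 0 α (cauchyExtension a) ≤ 6 * circleHolderNorm 0 α φ := by
  have hH := circleHolderSeminorm_nonneg 0 α φ
  have hM := circleDerivSup_nonneg 0 φ
  have h := memHolderDisc_and_discHolderNorm_le ha.differentiableOn_cauchyExtension
    ha.continuousOn_cauchyExtension hα0
    (S := 2 * circleHolderSeminorm 0 α φ + 2 * circleDerivSup 0 φ) (by positivity)
    (M := fun _ ↦ circleDerivSup 0 φ) (k := 0) (fun j hj x hx ↦ ?_) fun x hx y hy ↦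
      norm_sub_le_mul_rpow_of_rotation (ha.differentiableOn_iteratedDeriv_cauchyExtension 0) hα1
        (by positivity) (fun z hz ω hω ↦ by
          simpa using ha.norm_cauchyExtension_mul_sub_le hα0 hα1 hφ hω hz) hx hy
  · refine ⟨h.1, h.2.trans ?_⟩
    rw [circleHolderNorm_eq, zero_add, Finset.sum_range_one, Finset.sum_range_one]
    linarith
  · rw [Nat.le_zero.1 hj, iteratedDeriv_zero]
    exact ha.norm_cauchyExtension_le hφ.1.continuous hx

end HasCircleExpansion

theorem cauchy_extension_general (k : ℕ) (α : ℝ) (hα : α ∈ Ioc (0 : ℝ) 1) (a : ℕ → ℂ) (φ : ℂ → ℂ)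
    (hφ : MemHolderCircle k α φ)
    (hrep : ∀ w ∈ sphere (0 : ℂ) 1, HasSum (fun n : ℕ ↦ a n * w ^ n) (φ w / w)) :
    ContinuousOn (fun z : ℂ ↦ ∑' n : ℕ, a n * z ^ n) (closedBall 0 1) ∧
    DifferentiableOn ℂ (fun z : ℂ ↦ ∑' n : ℕ, a n * z ^ n) (ball 0 1) ∧
    MemHolderDisc k α (fun z : ℂ ↦ ∑' n : ℕ, a n * z ^ n) ∧
    discHolderNorm k α (fun z : ℂ ↦ ∑' n : ℕ, a n * z ^ n) ≤ 6 * circleHolderNorm k α φ := by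
  have ha : HasCircleExpansion a φ := hrep
  refine ⟨ha.continuousOn_cauchyExtension, ha.differentiableOn_cauchyExtension, ?_⟩
  rcases eq_or_ne k 0 with rfl | hk
  · exact ha.memHolderDisc_and_discHolderNorm_le_of_eq_zero hα.1 hα.2 hφ
  · exact ha.memHolderDisc_and_discHolderNorm_le_of_ne_zero hk hα.1 hα.2 hφ

/-- extension of Cauchy integrals. If `φ ∈ C^{k,α}(𝕋)` has the form
`φ(w) = w·Σ_{n≥0} aₙwⁿ` with real coefficients, then `C(φ)(z) = Σ_{n≥0} aₙzⁿ` is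
well-defined and continuous on `𝔻̄`, holomorphic in `𝔻`, belongs to `C^{k,α}(𝔻̄)` and
satisfies `‖C(φ)‖_{C^{k,α}(𝔻̄)} ≤ 6‖φ‖_{C^{k,α}(𝕋)}`. -/
theorem cauchy_extension (k : ℕ) (α : ℝ) (hα : α ∈ Ioo (0:ℝ) 1)
    (a : ℕ → ℝ) (φ : ℂ → ℂ)
    (hφ : MemHolderCircle k α φ)
    (hrep : ∀ w ∈ sphere (0:ℂ) 1, HasSum (fun n : ℕ => (a n : ℂ) * w ^ n) (φ w / w)) :
    ContinuousOn (fun z : ℂ => ∑' n : ℕ, (a n : ℂ) * z ^ n) (closedBall 0 1) ∧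
    DifferentiableOn ℂ (fun z : ℂ => ∑' n : ℕ, (a n : ℂ) * z ^ n) (ball 0 1) ∧
    MemHolderDisc k α (fun z : ℂ => ∑' n : ℕ, (a n : ℂ) * z ^ n) ∧
    discHolderNorm k α (fun z : ℂ => ∑' n : ℕ, (a n : ℂ) * z ^ n)
      ≤ 6 * circleHolderNorm k α φ :=
  cauchy_extension_general k α ⟨hα.1, hα.2.le⟩ (fun n ↦ a n) φ hφ hrep
end
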